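/- arXiv:1206.2424 — 6 statements merged into one kernel-verified Lean document; each statement's English description precedes it below -/
import Mathlib

section
/- For every integer s ≥ 3, the sum of the double zeta values ∑_{j=2}^{s-1} ζ(j, s-j) equals ζ(s). -/
/-!
Write `n = m + k` with `m, k ≥ 1`. For fixed `n > m` the sum over `j` is geometric:
`∑_{j=2}^{s-1} 1 / (n^j m^(s-j)) = 1 / (n k m^(s-2)) - 1 / (n^(s-1) k)`
(`sum_geom_identity`). Each of the two terms is bounded by `1 / (m k (m + k))`, which is summable
over all pairs because `m + k ≥ √m √k` (`summable_pairs`), so the two double series may be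
evaluated separately.

* Summing the first term over `k` telescopes, since `∑_k 1 / (k (k + m)) = H_m / m`
  (`hasSum_telescope`), and the double series becomes `∑_m H_m / m^(s-1)`.
* After exchanging the roles of `m` and `k`, the second double series is
  `ζ(s-1, 1) = ∑_n H_{n-1} / n^(s-1)`.

As `H_n - H_{n-1} = 1 / n`, the difference is `∑_n 1 / n^s = ζ(s)`.

In the code the pairs range over `ℕ × ℕ`, with `m = p.1 + 1` and `k = p.2 + 1`.
-/

open scoped BigOperators

/-- Riemann zeta value at a natural number `s ≥ 2`: `ζ(s) = ∑_{n≥1} 1/n^s`. -/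
noncomputable def rzeta (s : ℕ) : ℝ := ∑' n : ℕ, 1 / (n : ℝ) ^ s

/-- Double zeta value `ζ(a,b) = ∑_{n≥1} ∑_{m=1}^{n-1} 1/(n^a m^b)`. -/
noncomputable def dzeta (a b : ℕ) : ℝ :=
  ∑' n : ℕ, ∑ m ∈ Finset.Ioo 0 n, 1 / ((n : ℝ) ^ a * (m : ℝ) ^ b)

/-- Witten zeta function `W(r,s,t) = ∑_{n,m ≥ 1} 1/(n^r m^s (n+m)^t)`. -/
noncomputable def wzeta (r s t : ℕ) : ℝ :=
  ∑' n : ℕ+, ∑' m : ℕ+, 1 / ((n : ℝ) ^ r * (m : ℝ) ^ s * ((n : ℝ) + (m : ℝ)) ^ t)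

/-- Alternating double zeta value `ζ(a, b̄)`. -/
noncomputable def dzetaAB (a b : ℕ) : ℝ :=
  ∑' n : ℕ, ∑ m ∈ Finset.Ioo 0 n, (1 / (n : ℝ) ^ a) * ((-1 : ℝ) ^ (m - 1) / (m : ℝ) ^ b)

/-- Alternating double zeta value `ζ(ā, b)`. -/
noncomputable def dzetaBA (a b : ℕ) : ℝ :=
  ∑' n : ℕ, ∑ m ∈ Finset.Ioo 0 n, ((-1 : ℝ) ^ (n - 1) / (n : ℝ) ^ a) * (1 / (m : ℝ) ^ b)

/-- Doubly alternating double zeta value `ζ(ā, b̄)`. -/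
noncomputable def dzetaBB (a b : ℕ) : ℝ :=
  ∑' n : ℕ, ∑ m ∈ Finset.Ioo 0 n,
    ((-1 : ℝ) ^ (n - 1) / (n : ℝ) ^ a) * ((-1 : ℝ) ^ (m - 1) / (m : ℝ) ^ b)

/-- The `n`-th harmonic number `H_n = ∑_{k=1}^n 1/k` (with `H_0 = 0`). -/
noncomputable def H (n : ℕ) : ℝ := ∑ k ∈ Finset.Icc 1 n, 1 / (k : ℝ)

lemma summable_pairs :
    Summable (fun p : ℕ × ℕ => 1 / (((p.1 : ℝ) + 1) * (p.2 + 1) * (p.1 + p.2 + 2))) := by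
  have h1 : Summable (fun n : ℕ => 1 / (((n : ℝ) + 1) * √((n : ℝ) + 1))) := by
    have h := (summable_nat_add_iff 1).2
      (Real.summable_one_div_nat_rpow.2 (by norm_num : (1 : ℝ) < 1 + 1 / 2))
    refine h.congr fun n => ?_
    have hn : (0 : ℝ) < (n : ℝ) + 1 := by positivity
    push_cast
    rw [Real.rpow_add hn, Real.rpow_one, Real.sqrt_eq_rpow]
  have h2 := h1.mul_of_nonneg h1 (fun n => by positivity) (fun n => by positivity)
  refine Summable.of_nonneg_of_le (fun p => by positivity) (fun p => ?_) h2
  obtain ⟨m, k⟩ := p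
  dsimp only
  rw [one_div_mul_one_div]
  apply one_div_le_one_div_of_le (by positivity)
  have hm : √((m : ℝ) + 1) ^ 2 = m + 1 := Real.sq_sqrt (by positivity)
  have hk : √((k : ℝ) + 1) ^ 2 = k + 1 := Real.sq_sqrt (by positivity)
  have h3 : √((m : ℝ) + 1) * √((k : ℝ) + 1) ≤ m + k + 2 := by
    nlinarith [sq_nonneg (√((m : ℝ) + 1) - √((k : ℝ) + 1)), Real.sqrt_nonneg ((m : ℝ) + 1),
      Real.sqrt_nonneg ((k : ℝ) + 1)]
  calc _ = ((m : ℝ) + 1) * (k + 1) * (√((m : ℝ) + 1) * √((k : ℝ) + 1)) := by ring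
    _ ≤ _ := by gcongr

/-- Regrouping a summable family over pairs `(m, k)` along the diagonals `n = m + k`. -/
lemma hasSum_diagonal (f : ℕ → ℕ → ℝ)
    (hf : Summable (fun p : ℕ × ℕ => f (p.1 + p.2 + 2) (p.1 + 1))) :
    HasSum (fun n : ℕ => ∑ m ∈ Finset.Ioo 0 n, f n m)
      (∑' p : ℕ × ℕ, f (p.1 + p.2 + 2) (p.1 + 1)) := by
  have h1 := (Finset.HasAntidiagonal.sigmaAntidiagonalEquivProd.hasSum_iff (f := fun p : ℕ × ℕ =>
    f (p.1 + p.2 + 2) (p.1 + 1))).2 hf.hasSum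
  have h2 := h1.sigma (fun n => hasSum_fintype _)
  -- The terms `n = 0` and `n = 1` are empty sums.
  rw [← hasSum_nat_add_iff' 2]
  have h0 : ∑ i ∈ Finset.range 2, ∑ m ∈ Finset.Ioo 0 i, f i m = 0 := by
    simp [Finset.sum_range_succ, show Finset.Ioo 0 1 = (∅ : Finset ℕ) from rfl]
  rw [h0, sub_zero]
  refine (congrArg (HasSum · _) (funext fun n => ?_)).mpr h2
  change _ = ∑ b : Finset.HasAntidiagonal.antidiagonal n, f (b.1.1 + b.1.2 + 2) (b.1.1 + 1)
  rw [Finset.sum_coe_sort (Finset.HasAntidiagonal.antidiagonal n)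
      (fun p : ℕ × ℕ => f (p.1 + p.2 + 2) (p.1 + 1)),
    Finset.Nat.sum_antidiagonal_eq_sum_range_succ (fun i j => f (i + j + 2) (i + 1)),
    ← Finset.Ico_add_one_left_eq_Ioo, Finset.sum_Ico_eq_sum_range]
  refine Finset.sum_congr (by congr 1) fun m hm => ?_
  rw [Finset.mem_range] at hm
  congr 1 <;> omega

lemma dzeta_pairs_summable (a b : ℕ) (ha : 2 ≤ a) (hb : 1 ≤ b) :
    Summable (fun p : ℕ × ℕ =>
      1 / (((p.1 + p.2 + 2 : ℕ) : ℝ) ^ a * ((p.1 + 1 : ℕ) : ℝ) ^ b)) := by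
  refine Summable.of_nonneg_of_le (fun p => by positivity) (fun p => ?_) summable_pairs
  obtain ⟨m, k⟩ := p
  dsimp only
  push_cast
  apply one_div_le_one_div_of_le (by positivity)
  have hm : (0 : ℝ) ≤ m := by positivity
  have hk : (0 : ℝ) ≤ k := by positivity
  have h1 : ((m : ℝ) + k + 2) ^ 2 ≤ (m + k + 2) ^ a := pow_le_pow_right₀ (by linarith) ha
  have h2 : ((m : ℝ) + 1) ^ 1 ≤ (m + 1) ^ b := pow_le_pow_right₀ (by linarith) hb
  calc ((m : ℝ) + 1) * (k + 1) * (m + k + 2)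
      ≤ ((m : ℝ) + 1) * (m + k + 2) * (m + k + 2) := by gcongr <;> linarith
    _ = (m + k + 2) ^ 2 * ((m : ℝ) + 1) ^ 1 := by ring
    _ ≤ _ := by gcongr

lemma H_succ (n : ℕ) : H (n + 1) = H n + 1 / ((n : ℝ) + 1) := by
  unfold H
  rw [Finset.sum_Icc_succ_top (by omega)]
  push_cast
  rfl

lemma hasSum_telescope_step (M : ℕ) :
    HasSum (fun k : ℕ => 1 / ((k : ℝ) + M + 1) - 1 / ((k : ℝ) + M + 2)) (1 / ((M : ℝ) + 1)) := by
  rw [hasSum_iff_tendsto_nat_of_nonneg]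
  · have h : ∀ n : ℕ, ∑ k ∈ Finset.range n, (1 / ((k : ℝ) + M + 1) - 1 / ((k : ℝ) + M + 2))
        = 1 / ((M : ℝ) + 1) - 1 / (((n + M : ℕ) : ℝ) + 1) := by
      intro n
      have := Finset.sum_range_sub' (fun k : ℕ => 1 / ((k : ℝ) + M + 1)) n
      push_cast at this ⊢
      rw [zero_add] at this
      rw [← this]
      refine Finset.sum_congr rfl fun k _ => ?_
      ring
    simp_rw [h]
    have h3 := (Filter.tendsto_add_atTop_iff_nat M).2
      (tendsto_one_div_add_atTop_nhds_zero_nat (𝕜 := ℝ))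
    simpa using h3.const_sub (1 / ((M : ℝ) + 1))
  · intro k
    rw [sub_nonneg]
    apply one_div_le_one_div_of_le (by positivity)
    linarith

/-- Dividing by `M ≥ 1` gives `∑_{k ≥ 1} 1 / (k (k + M)) = H_M / M`. -/
lemma hasSum_telescope (M : ℕ) :
    HasSum (fun k : ℕ => 1 / ((k : ℝ) + 1) - 1 / ((k : ℝ) + M + 1)) (H M) := by
  induction M with
  | zero => simp [H]
  | succ M ih =>
    rw [H_succ]
    convert ih.add (hasSum_telescope_step M) using 2 with k
    push_cast
    ring

/-- The geometric sum over `j`, with `t = s - 3`. -/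
lemma sum_geom_identity (t : ℕ) (m k : ℝ) (hm : 0 < m) (hk : 0 < k) :
    ∑ j ∈ Finset.Icc 2 (t + 2), 1 / ((m + k) ^ j * m ^ (t + 3 - j))
      = 1 / ((m + k) * k * m ^ (t + 1)) - 1 / ((m + k) ^ (t + 2) * k) := by
  induction t with
  | zero =>
    simp
    field_simp
    ring
  | succ t ih =>
    rw [Finset.sum_Icc_succ_top (by omega)]
    have h : ∑ j ∈ Finset.Icc 2 (t + 2), 1 / ((m + k) ^ j * m ^ (t + 1 + 3 - j))
        = (∑ j ∈ Finset.Icc 2 (t + 2), 1 / ((m + k) ^ j * m ^ (t + 3 - j))) / m := by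
      rw [Finset.sum_div]
      refine Finset.sum_congr rfl fun j hj => ?_
      have := (Finset.mem_Icc.1 hj).2
      rw [show t + 1 + 3 - j = (t + 3 - j) + 1 by omega]
      rw [div_div, pow_succ, mul_assoc]
    rw [show t + 1 + 2 = t + 2 + 1 by omega]
    rw [h, ih, show t + 1 + 3 - (t + 2 + 1) = 1 by omega]
    field_simp
    ring

/-- The double series `∑ 1 / (n k m^(s-2))` with `n = m + k`, summed over `k` first (`t = s - 3`). -/
lemma hasSum_first (t : ℕ) :
    HasSum (fun m : ℕ => H (m + 1) / ((m : ℝ) + 1) ^ (t + 2))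
      (∑' p : ℕ × ℕ, 1 / (((p.1 : ℝ) + 1 + (p.2 + 1)) * (p.2 + 1) * ((p.1 : ℝ) + 1) ^ (t + 1))) ∧
    Summable (fun p : ℕ × ℕ =>
      1 / (((p.1 : ℝ) + 1 + (p.2 + 1)) * (p.2 + 1) * ((p.1 : ℝ) + 1) ^ (t + 1))) := by
  have hS : Summable (fun p : ℕ × ℕ =>
      1 / (((p.1 : ℝ) + 1 + (p.2 + 1)) * (p.2 + 1) * ((p.1 : ℝ) + 1) ^ (t + 1))) := by
    refine Summable.of_nonneg_of_le (fun p => by positivity) (fun p => ?_) summable_pairs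
    obtain ⟨m, k⟩ := p
    dsimp only
    apply one_div_le_one_div_of_le (by positivity)
    have hm : (0 : ℝ) ≤ m := by positivity
    have h2 : ((m : ℝ) + 1) ^ 1 ≤ (m + 1) ^ (t + 1) := pow_le_pow_right₀ (by linarith) (by omega)
    calc ((m : ℝ) + 1) * (k + 1) * (m + k + 2)
        = ((m : ℝ) + 1 + (k + 1)) * (k + 1) * ((m : ℝ) + 1) ^ 1 := by ring
      _ ≤ _ := by gcongr
  refine ⟨hS.hasSum.prod_fiberwise fun m => ?_, hS⟩
  refine (congrArg (HasSum · _) (funext fun k => ?_)).mpr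
    ((hasSum_telescope (m + 1)).div_const (((m : ℝ) + 1) ^ (t + 2)))
  push_cast
  field_simp
  ring

/-- The double series `∑ 1 / (n^(s-1) k)` with `n = m + k`, summed along `n` (`t = s - 3`). -/
lemma hasSum_second (t : ℕ) :
    HasSum (fun n : ℕ => H n / ((n : ℝ) + 1) ^ (t + 2))
      (∑' p : ℕ × ℕ, 1 / (((p.1 : ℝ) + 1 + (p.2 + 1)) ^ (t + 2) * ((p.2 : ℝ) + 1))) ∧
    Summable (fun p : ℕ × ℕ =>
      1 / (((p.1 : ℝ) + 1 + (p.2 + 1)) ^ (t + 2) * ((p.2 : ℝ) + 1))) := by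
  have hS := dzeta_pairs_summable (t + 2) 1 (by omega) le_rfl
  have hfun : (fun p : ℕ × ℕ => 1 / (((p.1 : ℝ) + 1 + (p.2 + 1)) ^ (t + 2) * ((p.2 : ℝ) + 1)))
      = (fun p : ℕ × ℕ =>
        1 / (((p.1 + p.2 + 2 : ℕ) : ℝ) ^ (t + 2) * ((p.1 + 1 : ℕ) : ℝ) ^ 1))
          ∘ (Equiv.prodComm ℕ ℕ) := by
    funext p
    simp only [Function.comp, Equiv.prodComm_apply, Prod.fst_swap, Prod.snd_swap]
    push_cast
    congr 2
    · congr 1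
      ring
    · ring
  refine ⟨?_, hfun ▸ (Equiv.prodComm ℕ ℕ).summable_iff.2 hS⟩
  have hD := hasSum_diagonal (fun n m => 1 / ((n : ℝ) ^ (t + 2) * (m : ℝ) ^ 1)) hS
  rw [hfun, show (∑' p : ℕ × ℕ, ((fun p : ℕ × ℕ =>
        1 / (((p.1 + p.2 + 2 : ℕ) : ℝ) ^ (t + 2) * ((p.1 + 1 : ℕ) : ℝ) ^ 1))
          ∘ (Equiv.prodComm ℕ ℕ)) p) = _ from (Equiv.prodComm ℕ ℕ).tsum_eq
          (fun p : ℕ × ℕ =>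
            1 / (((p.1 + p.2 + 2 : ℕ) : ℝ) ^ (t + 2) * ((p.1 + 1 : ℕ) : ℝ) ^ 1))]
  rw [← hasSum_nat_add_iff' 1] at hD
  simp only [Finset.range_one, Finset.sum_singleton, Finset.Ioo_self, Finset.sum_empty,
    sub_zero] at hD
  refine (congrArg (HasSum · _) (funext fun n => ?_)).mpr hD
  rw [← Finset.Ico_add_one_left_eq_Ioo, H, Finset.sum_div]
  refine Finset.sum_congr (by ext; simp) fun m hm => ?_
  have : (0 : ℝ) < m := by exact_mod_cast (Finset.mem_Icc.1 hm).1
  push_cast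
  field_simp

theorem stmt0 (s : ℕ) (hs : 3 ≤ s) :
    ∑ j ∈ Finset.Icc 2 (s - 1), dzeta j (s - j) = rzeta s := by
  obtain ⟨t, rfl⟩ : ∃ t, s = t + 3 := ⟨s - 3, by omega⟩
  obtain ⟨h1, hS1⟩ := hasSum_first t
  obtain ⟨h2, hS2⟩ := hasSum_second t
  have hz : HasSum (fun n : ℕ => 1 / ((n : ℝ) + 1) ^ (t + 3)) (rzeta (t + 3)) := by
    have h := (Real.summable_one_div_nat_pow.2 (by omega : 1 < t + 3)).hasSum
    rw [← hasSum_nat_add_iff' 1] at h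
    simpa [rzeta] using h
  have h3 := h1.sub h2
  have h4 : (fun n : ℕ => H (n + 1) / ((n : ℝ) + 1) ^ (t + 2) - H n / ((n : ℝ) + 1) ^ (t + 2))
      = fun n : ℕ => 1 / ((n : ℝ) + 1) ^ (t + 3) := by
    funext n
    rw [H_succ]
    field_simp
    ring
  rw [h4, ← hS1.tsum_sub hS2] at h3
  rw [hz.unique h3]
  have hd : ∀ j ∈ Finset.Icc 2 (t + 2), Summable (fun p : ℕ × ℕ =>
      1 / (((p.1 + p.2 + 2 : ℕ) : ℝ) ^ j * ((p.1 + 1 : ℕ) : ℝ) ^ (t + 3 - j))) := by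
    intro j hj
    rw [Finset.mem_Icc] at hj
    exact dzeta_pairs_summable j _ hj.1 (by omega)
  have hdz : ∀ j ∈ Finset.Icc 2 (t + 2), dzeta j (t + 3 - j) = ∑' p : ℕ × ℕ,
      1 / (((p.1 + p.2 + 2 : ℕ) : ℝ) ^ j * ((p.1 + 1 : ℕ) : ℝ) ^ (t + 3 - j)) := fun j hj =>
    (hasSum_diagonal (fun n m => 1 / ((n : ℝ) ^ j * (m : ℝ) ^ (t + 3 - j))) (hd j hj)).tsum_eq
  rw [show t + 3 - 1 = t + 2 by omega, Finset.sum_congr rfl hdz, ← Summable.tsum_finsetSum hd]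
  refine tsum_congr fun p => ?_
  rw [← sum_geom_identity t ((p.1 : ℝ) + 1) (p.2 + 1) (by positivity) (by positivity)]
  refine Finset.sum_congr rfl fun j _ => ?_
  push_cast
  congr 3
  ring
end

section
/- For every integer s ≥ 3, the weighted sum ∑_{j=2}^{s-1} 2^j ζ(j, s-j) equals (s+1) ζ(s). -/
/-!
Put `s = t + 3`. For fixed `0 < m < n` the sum of `2^j / (n^j m^(s-j))` over `2 ≤ j ≤ s - 1` is a
finite geometric sum. If `n = 2m` it equals `(s - 2) / m^s`. Otherwise its closed form is
`4 / (n (n - 2m))` times `m^(-(s-2)) - (2/n)^(s-2)` (`geom_term`). For fixed `n` the part with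
`(2/n)^(s-2)` sums to zero over `m`, because `m ↦ n - m` changes the sign of `n - 2m`
(`sum_antisymm`).

What remains is `∑_{n > m} 4 / (n (n - 2m) m^(s-2))`, over pairs with `n ≠ 2m`. This double series
converges absolutely (`summable_offDiag`), so it may be summed over `n` first. By partial fractions
the sum over `n > m` telescopes with step `2m` and gives `3 / m^s` (`hasSum_offDiag`). Together with
the line `n = 2m` each `m` contributes `(s + 1) / m^s`.
-/

open scoped BigOperators

/-- The kernel `4 / (n (n - 2m) m^(t+1))` on pairs `0 < m < n`, `n ≠ 2m`. It vanishes on the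
remaining pairs: at `n = 2m` and at `m = 0` because of the convention `x / 0 = 0`. -/
noncomputable def offDiag (t n m : ℕ) : ℝ :=
  if m < n then 4 / ((n : ℝ) * ((n : ℝ) - 2 * m) * (m : ℝ) ^ (t + 1)) else 0

/-- The contribution of the line `n = 2m`, where all `t + 1` summands of the geometric sum agree. -/
noncomputable def diag (t n m : ℕ) : ℝ :=
  if n = 2 * m then ((t : ℝ) + 1) / (m : ℝ) ^ (t + 3) else 0

/-! ### Summability -/

/-- Since `√(ab) ≤ c`, the product `cab` dominates `(ab)^(3/2)`. -/
lemma inv_le_rpow_mul {a b c : ℝ} (ha : 0 < a) (hb : 0 < b) (hac : a ≤ c) (hbc : b ≤ c) :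
    1 / (c * (a * b)) ≤ a ^ (-(3 / 2) : ℝ) * b ^ (-(3 / 2) : ℝ) := by
  have hab : 0 < a * b := mul_pos ha hb
  have hc : 0 < c := ha.trans_le hac
  rw [← Real.mul_rpow ha.le hb.le, Real.rpow_neg hab.le, one_div]
  have h1 : (a * b) ^ ((3 / 2) : ℝ) = √(a * b) * (a * b) := by
    rw [Real.sqrt_eq_rpow]
    nth_rewrite 3 [← Real.rpow_one (a * b)]
    rw [← Real.rpow_add hab]
    norm_num
  rw [h1]
  have h2 : √(a * b) ≤ c := by
    rw [Real.sqrt_le_left hc.le]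
    nlinarith
  gcongr

lemma summable_dzeta {a b : ℕ} (ha : 2 ≤ a) (hb : 1 ≤ b) :
    Summable fun n : ℕ => ∑ m ∈ Finset.Ioo 0 n, 1 / ((n : ℝ) ^ a * (m : ℝ) ^ b) := by
  have hs : Summable fun n : ℕ => (n : ℝ) ^ (-(3 / 2) : ℝ) :=
    Real.summable_nat_rpow.2 (by norm_num)
  refine Summable.of_nonneg_of_le (fun n => Finset.sum_nonneg fun m _ => by positivity) ?_
    (hs.mul_right (∑' m : ℕ, (m : ℝ) ^ (-(3 / 2) : ℝ)))
  intro n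
  calc ∑ m ∈ Finset.Ioo 0 n, 1 / ((n : ℝ) ^ a * (m : ℝ) ^ b)
      ≤ ∑ m ∈ Finset.Ioo 0 n, (n : ℝ) ^ (-(3 / 2) : ℝ) * (m : ℝ) ^ (-(3 / 2) : ℝ) := by
        refine Finset.sum_le_sum fun m hm => ?_
        rw [Finset.mem_Ioo] at hm
        have hm1 : (1 : ℝ) ≤ m := by exact_mod_cast hm.1
        have hmn : (m : ℝ) ≤ n := by exact_mod_cast hm.2.le
        have hn1 : (1 : ℝ) ≤ n := hm1.trans hmn
        refine le_trans ?_ (inv_le_rpow_mul (by linarith) (by linarith) le_rfl hmn)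
        have h1 : (n : ℝ) ^ 2 ≤ (n : ℝ) ^ a := pow_le_pow_right₀ hn1 ha
        have h2 : (m : ℝ) ^ 1 ≤ (m : ℝ) ^ b := pow_le_pow_right₀ hm1 hb
        rw [← mul_assoc, ← sq]
        nth_rewrite 2 [← pow_one (m : ℝ)]
        gcongr
    _ = (n : ℝ) ^ (-(3 / 2) : ℝ) * ∑ m ∈ Finset.Ioo 0 n, (m : ℝ) ^ (-(3 / 2) : ℝ) := by
        rw [Finset.mul_sum]
    _ ≤ _ := by
        gcongr
        exact hs.sum_le_tsum _ fun m _ => by positivity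

/-- With `k = n - 2m` one has `m, |k| ≤ n`, so `offDiag` is dominated by
`4 m^(-3/2) |k|^(-3/2)`, which is summable over `(m, k) ∈ ℕ × ℤ`. -/
lemma summable_offDiag (t : ℕ) : Summable fun p : ℕ × ℕ => offDiag t p.2 p.1 := by
  have h1 : Summable fun n : ℕ => (n : ℝ) ^ (-(3 / 2) : ℝ) :=
    Real.summable_nat_rpow.2 (by norm_num)
  have h2 : Summable fun k : ℤ => |(k : ℝ)| ^ (-(3 / 2) : ℝ) :=
    Real.summable_abs_int_rpow (by norm_num)
  have h3 := (h1.mul_of_nonneg h2 (fun n => by positivity) (fun n => by positivity)).mul_left 4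
  have hinj : Function.Injective fun p : ℕ × ℕ => (p.1, (p.2 : ℤ) - 2 * p.1) := by
    rintro ⟨a, b⟩ ⟨c, d⟩ h
    simp only [Prod.mk.injEq] at h ⊢
    omega
  refine Summable.of_norm_bounded (h3.comp_injective hinj) ?_
  rintro ⟨m, n⟩
  simp only [Function.comp_apply, offDiag, Real.norm_eq_abs]
  push_cast
  split_ifs with hmn
  · by_cases hm : m = 0
    · subst hm
      simp only [CharP.cast_eq_zero, zero_pow (Nat.succ_ne_zero t), mul_zero, div_zero, abs_zero]
      positivity
    by_cases hk : (n : ℝ) - 2 * m = 0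
    · rw [hk]
      simp only [mul_zero, zero_mul, div_zero, abs_zero]
      positivity
    have hm1 : (1 : ℝ) ≤ m := by exact_mod_cast Nat.pos_of_ne_zero hm
    have hmn' : (m : ℝ) ≤ n := by exact_mod_cast hmn.le
    have hkpos : 0 < |(n : ℝ) - 2 * m| := abs_pos.2 hk
    have hkn : |(n : ℝ) - 2 * m| ≤ n := by
      rw [abs_le]; constructor <;> linarith
    have key := inv_le_rpow_mul (by linarith) hkpos hmn' hkn
    rw [abs_div, abs_mul, abs_mul, abs_of_nonneg (by positivity : (0 : ℝ) ≤ (m : ℝ) ^ (t + 1)),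
      abs_of_nonneg (by positivity : (0 : ℝ) ≤ n), abs_of_pos (by norm_num : (0 : ℝ) < 4)]
    rw [div_eq_mul_one_div]
    refine mul_le_mul_of_nonneg_left (le_trans ?_ key) (by norm_num)
    have hp : (m : ℝ) ≤ (m : ℝ) ^ (t + 1) := le_self_pow₀ hm1 (Nat.succ_ne_zero t)
    rw [mul_comm (m : ℝ), ← mul_assoc]
    have hn0 : (0 : ℝ) < n := by linarith
    gcongr
  · rw [abs_zero]
    positivity

lemma summable_diag (t : ℕ) : Summable fun p : ℕ × ℕ => diag t p.2 p.1 := by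
  have hinj : Function.Injective fun m : ℕ => (m, 2 * m) := fun a b h => by simpa using h
  refine (hinj.summable_iff ?_).1 ?_
  · rintro ⟨m, n⟩ h
    refine if_neg fun h' => h ⟨m, ?_⟩
    simp only at h'
    simp [h']
  · have : Summable fun m : ℕ => 1 / (m : ℝ) ^ (t + 3) :=
      Real.summable_one_div_nat_pow.2 (by omega)
    refine (this.mul_left ((t : ℝ) + 1)).congr fun m => ?_
    simp [diag, div_eq_mul_inv]

/-! ### Column sums -/

lemma hasSum_diag (t m : ℕ) :
    HasSum (fun n => diag t n m) (((t : ℝ) + 1) / (m : ℝ) ^ (t + 3)) :=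
  hasSum_ite_eq (2 * m) _

/-- The integers `1 - m, …, m` cancel in pairs, except for `m` (and `0`, with `1 / 0 = 0`). -/
lemma sum_symm_inv (m : ℕ) (hm : 0 < m) :
    ∑ i ∈ Finset.range (2 * m), 1 / ((i : ℝ) + 1 - m) = 1 / m := by
  obtain ⟨k, rfl⟩ : ∃ k, m = k + 1 := ⟨m - 1, by omega⟩
  rw [show 2 * (k + 1) = (2 * k + 1) + 1 by ring, Finset.sum_range_succ]
  have h : ∑ i ∈ Finset.range (2 * k + 1), 1 / ((i : ℝ) + 1 - (k + 1 : ℕ)) = 0 := by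
    have h1 := Finset.sum_range_reflect (fun i : ℕ => 1 / ((i : ℝ) + 1 - (k + 1 : ℕ))) (2 * k + 1)
    have h2 : ∑ i ∈ Finset.range (2 * k + 1), 1 / (((2 * k + 1 - 1 - i : ℕ) : ℝ) + 1 - (k + 1 : ℕ))
        = - ∑ i ∈ Finset.range (2 * k + 1), 1 / ((i : ℝ) + 1 - (k + 1 : ℕ)) := by
      rw [← Finset.sum_neg_distrib]
      refine Finset.sum_congr rfl fun i hi => ?_
      rw [Finset.mem_range] at hi
      rw [← one_div_neg_eq_neg_one_div, Nat.add_sub_cancel, Nat.cast_sub (by omega)]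
      congr 1
      push_cast
      ring
    linarith
  rw [h]
  push_cast
  rw [zero_add]
  congr 1
  ring

/-- A sum of differences with step `k` telescopes to its first `k` terms. -/
lemma tendsto_step_telescope (G : ℕ → ℝ) (hG : Filter.Tendsto G Filter.atTop (nhds 0)) (k : ℕ) :
    Filter.Tendsto (fun N => ∑ i ∈ Finset.range N, (G i - G (i + k))) Filter.atTop
      (nhds (∑ i ∈ Finset.range k, G i)) := by
  have h : ∀ N, ∑ i ∈ Finset.range N, (G i - G (i + k))
      = ∑ i ∈ Finset.range k, G i - ∑ i ∈ Finset.range k, G (N + i) := by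
    intro N
    have h1 := Finset.sum_range_add G N k
    have h2 := Finset.sum_range_add G k N
    rw [add_comm k N] at h2
    simp only [add_comm k] at h2
    rw [Finset.sum_sub_distrib]
    linarith
  simp only [h]
  have h3 : Filter.Tendsto (fun N => ∑ i ∈ Finset.range k, G (N + i)) Filter.atTop
      (nhds (∑ i ∈ Finset.range k, (0 : ℝ))) :=
    tendsto_finsetSum _ fun i _ => hG.comp (Filter.tendsto_add_atTop_nat i)
  simpa using h3.const_sub (∑ i ∈ Finset.range k, G i)

/-- Partial fractions in the shifted variable `i = n - m - 1`. At `n = 2m`, i.e. `i = m - 1`, the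
left side is `0` but the difference of reciprocals is not; the last summand makes up for it. -/
lemma offDiag_partial_fractions (t m i : ℕ) (hm : 0 < m) :
    offDiag t (i + (m + 1)) m
      = 2 / (m : ℝ) ^ (t + 2) * (1 / ((i : ℝ) + 1 - m) - 1 / (((i + 2 * m : ℕ) : ℝ) + 1 - m))
        + if i = m - 1 then 1 / (m : ℝ) ^ (t + 3) else 0 := by
  have hm0 : (m : ℝ) ≠ 0 := by positivity
  rw [offDiag, if_pos (by omega)]
  push_cast
  by_cases hi : i = m - 1
  · have hi' : (i : ℝ) = m - 1 := by rw [hi, Nat.cast_sub hm]; simp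
    rw [if_pos hi, hi']
    rw [show ((m : ℝ) - 1 + (m + 1) - 2 * m) = 0 by ring,
      show ((m : ℝ) - 1 + 1 - m) = 0 by ring]
    rw [show ((m : ℝ) - 1 + 2 * m + 1 - m) = 2 * m by ring]
    simp only [mul_zero, zero_mul, div_zero]
    field_simp
    ring
  · have h1 : (i : ℝ) + 1 - m ≠ 0 := by
      intro h
      have : (i : ℝ) + 1 = m := by linarith
      have : i + 1 = m := by exact_mod_cast this
      omega
    have h2 : (i : ℝ) + 1 + m ≠ 0 := by positivity
    rw [if_neg hi, show ((i : ℝ) + (m + 1) - 2 * m) = i + 1 - m by ring,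
      show ((i : ℝ) + (m + 1)) = i + 1 + m by ring,
      show ((i : ℝ) + 2 * m + 1 - m) = i + 1 + m by ring]
    field_simp
    ring

/-- By partial fractions, `1 / (n (n - 2m)) = (1 / (n - 2m) - 1 / n) / (2m)` for `n ≠ 2m`, and the
sum over `n > m` telescopes with step `2m`. -/
lemma hasSum_offDiag (t m : ℕ) :
    HasSum (fun n => offDiag t n m) (3 / (m : ℝ) ^ (t + 3)) := by
  have hsum : Summable fun n => offDiag t n m := (summable_offDiag t).prod_factor m
  rcases Nat.eq_zero_or_pos m with rfl | hm
  · simp [offDiag]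
  have hm0 : (m : ℝ) ≠ 0 := by positivity
  rw [← hasSum_nat_add_iff' (m + 1)]
  have hz : ∑ i ∈ Finset.range (m + 1), offDiag t i m = 0 :=
    Finset.sum_eq_zero fun i hi => if_neg (by rw [Finset.mem_range] at hi; omega)
  rw [hz, sub_zero]
  obtain ⟨G, hGdef⟩ : ∃ G : ℕ → ℝ, ∀ i, G i = 1 / ((i : ℝ) + 1 - m) := ⟨_, fun _ => rfl⟩
  have hG : Filter.Tendsto G Filter.atTop (nhds 0) := by
    have : Filter.Tendsto (fun i : ℕ => (i : ℝ) + (1 - m)) Filter.atTop Filter.atTop :=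
      Filter.tendsto_atTop_add_const_right _ _ tendsto_natCast_atTop_atTop
    refine (this.inv_tendsto_atTop).congr fun i => ?_
    simp [hGdef, add_sub_assoc]
  have hterm : ∀ i : ℕ, offDiag t (i + (m + 1)) m
      = 2 / (m : ℝ) ^ (t + 2) * (G i - G (i + 2 * m))
        + if i = m - 1 then 1 / (m : ℝ) ^ (t + 3) else 0 := by
    intro i
    rw [hGdef, hGdef]
    exact offDiag_partial_fractions t m i hm
  have hs' : Summable fun i => offDiag t (i + (m + 1)) m :=
    hsum.comp_injective (add_left_injective (m + 1))
  have hite : HasSum (fun i : ℕ => if i = m - 1 then 1 / (m : ℝ) ^ (t + 3) else 0)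
      (1 / (m : ℝ) ^ (t + 3)) := hasSum_ite_eq (m - 1) _
  rw [hs'.hasSum_iff_tendsto_nat]
  simp only [hterm, Finset.sum_add_distrib, ← Finset.mul_sum]
  have hlim := ((tendsto_step_telescope G hG (2 * m)).const_mul (2 / (m : ℝ) ^ (t + 2))).add
    hite.tendsto_sum_nat
  have hval : 2 / (m : ℝ) ^ (t + 2) * ∑ i ∈ Finset.range (2 * m), G i + 1 / (m : ℝ) ^ (t + 3)
      = 3 / (m : ℝ) ^ (t + 3) := by
    simp only [hGdef]
    rw [sum_symm_inv m hm]
    field_simp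
    ring
  rwa [hval] at hlim

/-! ### Row sums -/

/-- The geometric sum with ratio `2m / n`, in closed form. -/
lemma geom_term (t n m : ℕ) (hm : 0 < m) (hmn : m < n) :
    ∑ i ∈ Finset.range (t + 1), (2 : ℝ) ^ (i + 2) * (1 / ((n : ℝ) ^ (i + 2) * (m : ℝ) ^ (t + 1 - i)))
      = offDiag t n m + diag t n m
        - 4 / (n : ℝ) * (2 / (n : ℝ)) ^ (t + 1) * (1 / ((n : ℝ) - 2 * m)) := by
  have hm0 : (m : ℝ) ≠ 0 := by positivity
  have hn0 : (n : ℝ) ≠ 0 := by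
    have : 0 < n := by omega
    positivity
  have hL : ∑ i ∈ Finset.range (t + 1),
        (2 : ℝ) ^ (i + 2) * (1 / ((n : ℝ) ^ (i + 2) * (m : ℝ) ^ (t + 1 - i)))
      = 4 / ((n : ℝ) ^ 2 * m)
        * ∑ i ∈ Finset.range (t + 1), (2 / (n : ℝ)) ^ i * (1 / (m : ℝ)) ^ (t + 1 - 1 - i) := by
    rw [Finset.mul_sum]
    refine Finset.sum_congr rfl fun i hi => ?_
    rw [Finset.mem_range] at hi
    rw [show t + 1 - i = (t + 1 - 1 - i) + 1 by omega, div_pow, div_pow, one_pow, pow_succ (m : ℝ),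
      pow_add, pow_add]
    field_simp
    ring
  rw [hL, offDiag, if_pos hmn, diag]
  by_cases h : n = 2 * m
  · have hn : (n : ℝ) = 2 * m := by rw [h]; push_cast; ring
    rw [if_pos h, hn, sub_self]
    have hx : 2 / (2 * (m : ℝ)) = 1 / m := by field_simp
    have hc : ∑ i ∈ Finset.range (t + 1), (1 / (m : ℝ)) ^ i * (1 / (m : ℝ)) ^ (t + 1 - 1 - i)
        = ((t : ℝ) + 1) * (1 / (m : ℝ)) ^ t := by
      rw [Finset.sum_congr rfl (g := fun _ => (1 / (m : ℝ)) ^ t)]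
      · simp
      · intro i hi
        rw [Finset.mem_range] at hi
        rw [← pow_add]
        congr 1
        omega
    rw [hx, hc]
    simp only [mul_zero, zero_mul, div_zero, zero_add, sub_zero]
    rw [div_pow, one_pow]
    field_simp
    ring
  · have hd : (n : ℝ) - 2 * m ≠ 0 := by
      intro h'
      apply h
      have : (n : ℝ) = 2 * m := by linarith
      exact_mod_cast this
    have hg := geom_sum₂_mul (2 / (n : ℝ)) (1 / (m : ℝ)) (t + 1)
    have hxy : 2 / (n : ℝ) - 1 / m = - (((n : ℝ) - 2 * m) / (n * m)) := by
      field_simp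
      ring
    rw [hxy] at hg
    set S := ∑ i ∈ Finset.range (t + 1), (2 / (n : ℝ)) ^ i * (1 / (m : ℝ)) ^ (t + 1 - 1 - i)
    have hS : S = ((1 / (m : ℝ)) ^ (t + 1) - (2 / (n : ℝ)) ^ (t + 1)) * (n * m)
        / ((n : ℝ) - 2 * m) := by
      rw [eq_div_iff hd]
      field_simp at hg ⊢
      linarith
    rw [if_neg h, hS, div_pow 1, one_pow]
    generalize (2 / (n : ℝ)) ^ (t + 1) = X
    field_simp
    ring

/-- The reflection `m ↦ n - m` changes the sign of `n - 2m`. -/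
lemma sum_antisymm (n : ℕ) : ∑ m ∈ Finset.Ioo 0 n, 1 / ((n : ℝ) - 2 * m) = 0 := by
  have h : ∑ m ∈ Finset.Ioo 0 n, 1 / ((n : ℝ) - 2 * m)
      = ∑ m ∈ Finset.Ioo 0 n, - (1 / ((n : ℝ) - 2 * m)) := by
    refine Finset.sum_nbij' (fun m => n - m) (fun m => n - m) ?_ ?_ ?_ ?_ ?_
    · intro m hm; rw [Finset.mem_Ioo] at hm ⊢; omega
    · intro m hm; rw [Finset.mem_Ioo] at hm ⊢; omega
    · intro m hm; rw [Finset.mem_Ioo] at hm; omega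
    · intro m hm; rw [Finset.mem_Ioo] at hm; omega
    · intro m hm
      rw [Finset.mem_Ioo] at hm
      rw [← one_div_neg_eq_neg_one_div, Nat.cast_sub hm.2.le]
      congr 1
      ring
  rw [Finset.sum_neg_distrib] at h
  linarith

lemma row_sum (t n : ℕ) :
    ∑ i ∈ Finset.range (t + 1), (2 : ℝ) ^ (i + 2)
        * ∑ m ∈ Finset.Ioo 0 n, 1 / ((n : ℝ) ^ (i + 2) * (m : ℝ) ^ (t + 1 - i))
      = ∑' m, (offDiag t n m + diag t n m) := by
  have hz : ∀ m ∉ Finset.Ioo 0 n, offDiag t n m + diag t n m = 0 := by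
    intro m hm
    rw [Finset.mem_Ioo] at hm
    rcases Nat.eq_zero_or_pos m with rfl | h
    · simp [offDiag, diag]
    · rw [offDiag, diag, if_neg (by omega), if_neg (by omega), add_zero]
  rw [tsum_eq_sum hz]
  simp only [Finset.mul_sum]
  rw [Finset.sum_comm]
  rw [Finset.sum_congr rfl fun m hm => geom_term t n m (Finset.mem_Ioo.1 hm).1 (Finset.mem_Ioo.1 hm).2]
  rw [Finset.sum_sub_distrib, ← Finset.mul_sum, sum_antisymm, mul_zero, sub_zero]

theorem stmt1 (s : ℕ) (hs : 3 ≤ s) :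
    ∑ j ∈ Finset.Icc 2 (s - 1), (2 : ℝ) ^ j * dzeta j (s - j) = ((s : ℝ) + 1) * rzeta s := by
  obtain ⟨t, rfl⟩ : ∃ t, s = t + 3 := ⟨s - 3, by omega⟩
  have hidx : ∑ j ∈ Finset.Icc 2 (t + 3 - 1), (2 : ℝ) ^ j * dzeta j (t + 3 - j)
      = ∑ i ∈ Finset.range (t + 1), (2 : ℝ) ^ (i + 2) * dzeta (i + 2) (t + 1 - i) := by
    rw [← Finset.Ico_add_one_right_eq_Icc, Finset.sum_Ico_eq_sum_range]
    refine Finset.sum_congr (by congr 1) fun i _ => ?_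
    rw [add_comm 2 i, show t + 3 - (i + 2) = t + 1 - i by omega]
  have hpair : Summable (Function.uncurry fun m n : ℕ => offDiag t n m + diag t n m) :=
    (summable_offDiag t).add (summable_diag t)
  calc _ = ∑ i ∈ Finset.range (t + 1), (2 : ℝ) ^ (i + 2) * dzeta (i + 2) (t + 1 - i) := hidx
    _ = ∑' n : ℕ, ∑ i ∈ Finset.range (t + 1), (2 : ℝ) ^ (i + 2)
        * ∑ m ∈ Finset.Ioo 0 n, 1 / ((n : ℝ) ^ (i + 2) * (m : ℝ) ^ (t + 1 - i)) := by
        rw [Summable.tsum_finsetSum]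
        · simp only [dzeta, tsum_mul_left]
        · intro i hi
          rw [Finset.mem_range] at hi
          exact (summable_dzeta (by omega) (by omega)).mul_left _
    _ = ∑' n : ℕ, ∑' m : ℕ, (offDiag t n m + diag t n m) := by simp only [row_sum]
    _ = ∑' m : ℕ, ∑' n : ℕ, (offDiag t n m + diag t n m) := hpair.tsum_comm
    _ = ∑' m : ℕ, (((t + 3 : ℕ) : ℝ) + 1) * (1 / (m : ℝ) ^ (t + 3)) := by
        refine tsum_congr fun m => ?_
        rw [((hasSum_offDiag t m).add (hasSum_diag t m)).tsum_eq]
        push_cast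
        ring
    _ = _ := by rw [tsum_mul_left, rzeta]
end

section
/- For every integer s ≥ 2, the alternating sum ∑_{j=2}^{2s-1} (-1)^j ζ(j, 2s-j) equals (1/2) ζ(2s). -/
/-!
Write `k = 2s - 2`. For fixed `0 < m < n` the alternating sum over `j` of `1 / (n^j m^(2s-j))` is a
geometric sum, equal to `1 / (n (n+m) m^k) - 1 / (n^(k+1) (n+m))` (`geom_identity`).
Since `1 / (n (n+m)) = (1/m) (1/n - 1/(n+m))`, summing the first term over `n > m` telescopes to
`(1/m^(k+1)) ∑_{m < i ≤ 2m} 1/i` (`hasSum_column`), while summing the second over `m < n` gives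
`(1/n^(k+1)) ∑_{n < i < 2n} 1/i`. The two finite sums differ by the single term `1/(2n)`, so the
total is `∑ 1/(2 n^(2s))`.

All rearrangements are justified by domination: every double series that occurs is bounded termwise
by `1 / (n^2 m^2)` on `0 < m < n` (`summable_tri`).
-/

open scoped BigOperators

/-- Extension by zero to `ℕ × ℕ` of a function on the region `0 < m < n`, where `p = (n, m)`. -/
noncomputable def tri (f : ℕ → ℕ → ℝ) (p : ℕ × ℕ) : ℝ :=
  if 0 < p.2 ∧ p.2 < p.1 then f p.1 p.2 else 0

theorem summable_tri (f : ℕ → ℕ → ℝ)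
    (h : ∀ n m : ℕ, 0 < m → m < n → 0 ≤ f n m ∧ f n m ≤ 1 / ((n : ℝ) ^ 2 * (m : ℝ) ^ 2)) :
    Summable (tri f) := by
  have h2 : Summable (fun n : ℕ => 1 / (n : ℝ) ^ 2) :=
    Real.summable_one_div_nat_pow.mpr (by norm_num)
  have hp := h2.mul_of_nonneg h2 (fun n => by positivity) (fun n => by positivity)
  refine Summable.of_nonneg_of_le (fun p => ?_) (fun p => ?_) hp
  · unfold tri
    split_ifs with hc
    · exact (h _ _ hc.1 hc.2).1
    · exact le_rfl
  · unfold tri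
    split_ifs with hc
    · refine (h _ _ hc.1 hc.2).2.trans (le_of_eq ?_)
      rw [one_div_mul_one_div]
    · positivity

theorem tsum_tri_row (f : ℕ → ℕ → ℝ) (n : ℕ) :
    ∑' m : ℕ, tri f (n, m) = ∑ m ∈ Finset.Ioo 0 n, f n m := by
  rw [tsum_eq_sum (s := Finset.Ioo 0 n)]
  · refine Finset.sum_congr rfl fun m hm => ?_
    simp only [tri]
    rw [if_pos (Finset.mem_Ioo.mp hm)]
  · intro m hm
    simp only [tri]
    rw [if_neg (fun hc => hm (Finset.mem_Ioo.mpr hc))]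

theorem tsum_tri (f : ℕ → ℕ → ℝ) (hf : Summable (tri f)) :
    ∑' p, tri f p = ∑' n : ℕ, ∑ m ∈ Finset.Ioo 0 n, f n m := by
  rw [hf.tsum_prod]
  exact tsum_congr (tsum_tri_row f)

/-- The sum over `j = i + 2` of `(-1)^j / (n^j m^(2t+2-j))` in closed form; its ratio is `-m/n` and
the even number of terms fixes the sign of the second summand. -/
theorem geom_identity (n m : ℝ) (hn : 0 < n) (hm : 0 < m) (t : ℕ) :
    ∑ i ∈ Finset.range (2 * t), (-1 : ℝ) ^ i * (1 / (n ^ (i + 2) * m ^ (2 * t - i)))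
      = 1 / (n * (n + m) * m ^ (2 * t)) - 1 / (n ^ (2 * t + 1) * (n + m)) := by
  induction t with
  | zero => simp
  | succ t ih =>
    have hstep : ∑ i ∈ Finset.range (2 * t),
        (-1 : ℝ) ^ i * (1 / (n ^ (i + 2) * m ^ (2 * (t + 1) - i)))
        = (1 / m ^ 2) * ∑ i ∈ Finset.range (2 * t),
          (-1 : ℝ) ^ i * (1 / (n ^ (i + 2) * m ^ (2 * t - i))) := by
      rw [Finset.mul_sum]
      refine Finset.sum_congr rfl fun i hi => ?_
      have hi' := Finset.mem_range.mp hi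
      rw [show 2 * (t + 1) - i = (2 * t - i) + 2 by omega, pow_add m]
      field_simp
    rw [show 2 * (t + 1) = 2 * t + 1 + 1 by ring, Finset.sum_range_succ, Finset.sum_range_succ,
      show 2 * t + 1 + 1 = 2 * (t + 1) by ring, hstep, ih,
      show 2 * (t + 1) - 2 * t = 2 by omega, show 2 * (t + 1) - (2 * t + 1) = 1 by omega]
    have e : (-1 : ℝ) ^ (2 * t) = 1 := by simp
    have hs : n + m ≠ 0 := by positivity
    rw [pow_succ (-1 : ℝ), e]
    rw [show 2 * (t + 1) = 2 * t + 2 by ring]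
    simp only [pow_add]
    field_simp
    ring

theorem sum_shift_sub (f : ℕ → ℝ) (m N : ℕ) :
    ∑ i ∈ Finset.range N, (f i - f (m + i))
      = ∑ i ∈ Finset.range m, f i - ∑ i ∈ Finset.range m, f (N + i) := by
  have h1 := Finset.sum_range_add f m N
  have h2 := Finset.sum_range_add f N m
  rw [Finset.sum_sub_distrib]
  rw [add_comm N m] at h2
  linarith

/-- For fixed `m`, the series `∑_{n > m} 1/(n(n+m))` telescopes with step `m`, leaving
`(1/m) ∑_{m < i ≤ 2m} 1/i`. -/
theorem hasSum_column (m : ℕ) (hm : 0 < m) :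
    HasSum (fun n : ℕ => if 0 < m ∧ m < n then 1 / ((n : ℝ) * ((n : ℝ) + m)) else 0)
      ((1 / (m : ℝ)) * ∑ i ∈ Finset.range m, 1 / ((m : ℝ) + 1 + i)) := by
  have hm' : (0 : ℝ) < m := by exact_mod_cast hm
  rw [← hasSum_nat_add_iff' (m + 1)]
  have hz : ∑ n ∈ Finset.range (m + 1),
      (if 0 < m ∧ m < n then 1 / ((n : ℝ) * ((n : ℝ) + m)) else 0) = 0 := by
    refine Finset.sum_eq_zero fun n hn => ?_
    have := Finset.mem_range.mp hn
    rw [if_neg (by omega)]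
  rw [hz, sub_zero]
  set f : ℕ → ℝ := fun i => 1 / ((m : ℝ) + 1 + i) with hf
  have hterm : (fun i : ℕ => if 0 < m ∧ m < i + (m + 1) then
      1 / (((i + (m + 1) : ℕ) : ℝ) * (((i + (m + 1) : ℕ) : ℝ) + m)) else 0)
      = fun i => (1 / (m : ℝ)) * (f i - f (m + i)) := by
    funext i
    rw [if_pos (by omega)]
    simp only [hf]
    push_cast
    have h1 : (m : ℝ) + 1 + i ≠ 0 := by positivity
    have h2 : (m : ℝ) + 1 + (m + i) ≠ 0 := by positivity
    have h3 : (i : ℝ) + (m + 1) + m ≠ 0 := by positivity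
    have h4 : (i : ℝ) + (m + 1) ≠ 0 := by positivity
    field_simp
    ring
  rw [hterm]
  refine HasSum.mul_left _ ?_
  rw [hasSum_iff_tendsto_nat_of_nonneg]
  · simp_rw [sum_shift_sub]
    have : Filter.Tendsto (fun N : ℕ => ∑ i ∈ Finset.range m, f (N + i)) Filter.atTop
        (nhds (∑ i ∈ Finset.range m, (0 : ℝ))) := by
      refine tendsto_finsetSum _ fun i _ => ?_
      have hf0 : Filter.Tendsto f Filter.atTop (nhds 0) := by
        have := (tendsto_one_div_add_atTop_nhds_zero_nat (𝕜 := ℝ)).comp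
          (Filter.tendsto_add_atTop_nat m)
        refine this.congr fun i => ?_
        simp only [hf, Function.comp]
        push_cast
        congr 1
        ring
      exact hf0.comp (Filter.tendsto_add_atTop_nat i)
    simpa using tendsto_const_nhds.sub this
  · intro i
    simp only [hf, sub_nonneg]
    push_cast
    apply one_div_le_one_div_of_le <;> [positivity; linarith]

theorem sum_Ioo_add_half (n : ℕ) (hn : 0 < n) :
    ∑ i ∈ Finset.range n, 1 / ((n : ℝ) + 1 + i)
      = ∑ m ∈ Finset.Ioo 0 n, 1 / ((n : ℝ) + m) + 1 / (2 * (n : ℝ)) := by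
  obtain ⟨k, rfl⟩ : ∃ k, n = k + 1 := ⟨n - 1, by omega⟩
  rw [Finset.sum_range_succ]
  congr 1
  · have : Finset.Ioo 0 (k + 1) = Finset.Ico 1 (k + 1) := by ext; simp; omega
    rw [this, Finset.sum_Ico_eq_sum_range]
    refine Finset.sum_congr (by simp) fun i _ => ?_
    push_cast
    congr 1
    ring
  · push_cast
    congr 1
    ring

/-- The termwise domination used for every double series below. -/
theorem sq_mul_sq_le (x y : ℝ) (a b : ℕ) (hy : 1 ≤ y) (hxy : y ≤ x) (ha : 2 ≤ a) (hb : 1 ≤ b)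
    (hab : 4 ≤ a + b) : x ^ 2 * y ^ 2 ≤ x ^ a * y ^ b := by
  have hx : 1 ≤ x := hy.trans hxy
  rcases Nat.lt_or_ge b 2 with h | h
  · obtain rfl : b = 1 := by omega
    calc x ^ 2 * y ^ 2 = x ^ 2 * y * y := by ring
      _ ≤ x ^ 2 * y * x := by gcongr
      _ = x ^ 3 * y ^ 1 := by ring
      _ ≤ x ^ a * y ^ 1 := by gcongr; omega
  · gcongr

theorem stmt2 (s : ℕ) (hs : 2 ≤ s) :
    ∑ j ∈ Finset.Icc 2 (2 * s - 1), (-1 : ℝ) ^ j * dzeta j (2 * s - j)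
      = (1 / 2) * rzeta (2 * s) := by
  obtain ⟨t, rfl⟩ : ∃ t, s = t + 1 := ⟨s - 1, by omega⟩
  have ht : 1 ≤ t := by omega
  set F : ℕ → ℕ → ℕ → ℝ := fun i n m => 1 / ((n : ℝ) ^ (i + 2) * (m : ℝ) ^ (2 * t - i)) with hF
  set A : ℕ → ℕ → ℝ := fun n m => 1 / ((n : ℝ) * (n + m) * (m : ℝ) ^ (2 * t)) with hA
  set B : ℕ → ℕ → ℝ := fun n m => 1 / ((n : ℝ) ^ (2 * t + 1) * (n + m)) with hB
  set T : ℕ → ℝ := fun m => ∑ i ∈ Finset.range m, 1 / ((m : ℝ) + 1 + i) with hT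
  have hFs : ∀ i ∈ Finset.range (2 * t), Summable (tri (F i)) := by
    intro i hi
    have hi' := Finset.mem_range.mp hi
    refine summable_tri _ fun n m hm hmn => ⟨by positivity, ?_⟩
    have h1 : (1 : ℝ) ≤ m := by exact_mod_cast hm
    have h2 : (m : ℝ) ≤ n := by exact_mod_cast hmn.le
    have h3 : (0 : ℝ) < n := by linarith
    exact one_div_le_one_div_of_le (by positivity)
      (sq_mul_sq_le _ _ _ _ h1 h2 (by omega) (by omega) (by omega))
  have hAs : Summable (tri A) := by
    refine summable_tri _ fun n m hm hmn => ⟨by positivity, ?_⟩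
    have h1 : (1 : ℝ) ≤ m := by exact_mod_cast hm
    have h2 : (m : ℝ) ≤ n := by exact_mod_cast hmn.le
    have h3 : (0 : ℝ) < n := by linarith
    refine one_div_le_one_div_of_le (by positivity) ?_
    have h4 := sq_mul_sq_le _ _ 2 (2 * t) h1 h2 (by omega) (by omega) (by omega)
    refine h4.trans ?_
    gcongr
    nlinarith
  have hBs : Summable (tri B) := by
    refine summable_tri _ fun n m hm hmn => ⟨by positivity, ?_⟩
    have h1 : (1 : ℝ) ≤ m := by exact_mod_cast hm
    have h2 : (m : ℝ) ≤ n := by exact_mod_cast hmn.le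
    have h3 : (0 : ℝ) < n := by linarith
    refine one_div_le_one_div_of_le (by positivity) ?_
    have h4 := sq_mul_sq_le _ _ (2 * t + 1) 1 h1 h2 (by omega) (by omega) (by omega)
    refine h4.trans ?_
    gcongr
    linarith
  have hpt : ∀ p, ∑ i ∈ Finset.range (2 * t), (-1 : ℝ) ^ i * tri (F i) p = tri A p - tri B p := by
    rintro ⟨n, m⟩
    simp only [tri]
    split_ifs with hc
    · exact geom_identity n m (by exact_mod_cast hc.1.trans hc.2) (by exact_mod_cast hc.1) t
    · simp
  have hL : ∑ j ∈ Finset.Icc 2 (2 * (t + 1) - 1), (-1 : ℝ) ^ j * dzeta j (2 * (t + 1) - j)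
      = ∑ i ∈ Finset.range (2 * t), (-1 : ℝ) ^ i * ∑' p, tri (F i) p := by
    have : Finset.Icc 2 (2 * (t + 1) - 1) = Finset.Ico 2 (2 * t + 2) := by ext; simp; omega
    rw [this, Finset.sum_Ico_eq_sum_range]
    refine Finset.sum_congr (by simp) fun i hi => ?_
    have hi' : i < 2 * t := by simpa using hi
    rw [tsum_tri _ (hFs i (Finset.mem_range.mpr hi'))]
    simp only [dzeta, hF]
    rw [show 2 * (t + 1) - (2 + i) = 2 * t - i by omega, add_comm 2 i, pow_add]
    simp
  -- The first part is summed over `n` with `m` fixed, the second over `m` with `n` fixed.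
  have hAcol : HasSum (fun m : ℕ => 1 / (m : ℝ) ^ (2 * t + 1) * T m) (∑' p, tri A p) := by
    have hsw : HasSum (fun q : ℕ × ℕ => tri A q.swap) (∑' p, tri A p) :=
      (Equiv.prodComm ℕ ℕ).hasSum_iff (f := tri A) |>.mpr hAs.hasSum
    refine hsw.prod_fiberwise fun m => ?_
    rcases Nat.eq_zero_or_pos m with rfl | hm
    · simp [tri]
    · have h := (hasSum_column m hm).mul_left (1 / (m : ℝ) ^ (2 * t))
      have hm' : (m : ℝ) ≠ 0 := by positivity
      have e1 : (fun n : ℕ => tri A (m, n).swap) = fun n : ℕ => 1 / (m : ℝ) ^ (2 * t) *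
          (if 0 < m ∧ m < n then 1 / ((n : ℝ) * ((n : ℝ) + m)) else 0) := by
        funext n
        simp only [tri, Prod.swap, hA]
        split_ifs with hc
        · rw [one_div_mul_one_div]
          congr 1
          ring
        · simp
      have e2 : 1 / (m : ℝ) ^ (2 * t + 1) * T m = 1 / (m : ℝ) ^ (2 * t) *
          ((1 / (m : ℝ)) * ∑ i ∈ Finset.range m, 1 / ((m : ℝ) + 1 + i)) := by
        rw [← mul_assoc, one_div_mul_one_div, pow_succ]
      rw [e2]
      exact e1 ▸ h
  have hBrow : HasSum (fun n : ℕ => ∑ m ∈ Finset.Ioo 0 n, B n m) (∑' p, tri B p) := by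
    rw [tsum_tri _ hBs]
    refine Summable.hasSum ?_
    have := hBs.prod
    simpa only [tsum_tri_row] using this
  have hdiff := hAcol.sub hBrow
  have hz : (fun n : ℕ => 1 / (n : ℝ) ^ (2 * t + 1) * T n - ∑ m ∈ Finset.Ioo 0 n, B n m)
      = fun n : ℕ => (1 / 2) * (1 / (n : ℝ) ^ (2 * (t + 1))) := by
    funext n
    rcases Nat.eq_zero_or_pos n with rfl | hn
    -- Both sides vanish at `n = 0`, since division by zero gives zero.
    · simp
    · have hn' : (n : ℝ) ≠ 0 := by positivity
      have hBn : ∑ m ∈ Finset.Ioo 0 n, B n m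
          = 1 / (n : ℝ) ^ (2 * t + 1) * ∑ m ∈ Finset.Ioo 0 n, 1 / ((n : ℝ) + m) := by
        rw [Finset.mul_sum]
        exact Finset.sum_congr rfl fun m _ => (one_div_mul_one_div _ _).symm
      rw [hBn, hT]
      simp only
      rw [sum_Ioo_add_half n hn, show 2 * (t + 1) = 2 * t + 1 + 1 by ring, pow_succ _ (2 * t + 1)]
      field_simp
      ring
  rw [hz] at hdiff
  rw [hL]
  simp_rw [← tsum_mul_left]
  rw [← Summable.tsum_finsetSum (fun i hi => (hFs i hi).mul_left _), tsum_congr hpt,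
    hAs.tsum_sub hBs, ← hdiff.tsum_eq, tsum_mul_left, rzeta]
end

section
/- For every integer s ≥ 2, the sum of double zeta values at even arguments satisfies ∑_{j=1}^{s-1} ζ(2j, 2s-2j) = (3/4) ζ(2s). -/
/-!
Write `s = r + 1`. For positive integers `m ≠ n` a geometric sum gives
`∑_{j=1}^{r} n^{-2j} m^{-(2s-2j)} = G(m,n) + G(n,m)` with `G(m,n) = m^{-2r} / (n² - m²)`
(`geometric_sum`). The family `G`, set to `0` on the diagonal, is absolutely summable over all pairs,
because `|n² - m²| ≥ (n - m)²` (`summable_kernel`). The left-hand side of the theorem is the sum over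
`m < n` of a function symmetric in `(m, n)`, so it equals `∑_{m,n} G(m,n)`. Summing over `n` first,
the telescoping evaluation `∑_{n ≥ 1, n ≠ m} 1/(n² - m²) = 3/(4m²)` (`tsum_inv_sq_sub_sq`) turns
this into `(3/4) ∑ m^{-2r-2} = (3/4) ζ(2s)`.
-/

open scoped BigOperators

/-- The summand `M^{-2r} / (N² - M²)` with `M = m + 1`, `N = n + 1`; division by zero makes it
vanish on the diagonal. -/
noncomputable def kernel (r : ℕ) (p : ℕ × ℕ) : ℝ :=
  (((p.1 : ℝ) + 1) ^ (2 * r))⁻¹ * (((p.2 : ℝ) + 1) ^ 2 - ((p.1 : ℝ) + 1) ^ 2)⁻¹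

lemma kernel_diag (r n : ℕ) : kernel r (n, n) = 0 := by
  simp [kernel]

lemma geometric_sum (M N : ℝ) (hM : 0 < M) (hN : 0 < N) (h : M ≠ N) (r : ℕ) :
    ∑ j ∈ Finset.Icc 1 r, 1 / (N ^ (2 * j) * M ^ (2 * (r + 1) - 2 * j)) =
      (M ^ (2 * r))⁻¹ * (N ^ 2 - M ^ 2)⁻¹ + (N ^ (2 * r))⁻¹ * (M ^ 2 - N ^ 2)⁻¹ := by
  have h1 : N ^ 2 - M ^ 2 ≠ 0 := by
    intro h0
    exact h ((sq_eq_sq₀ hM.le hN.le).mp (by linarith))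
  have h2 : (M ^ 2 - N ^ 2)⁻¹ = -(N ^ 2 - M ^ 2)⁻¹ := by
    rw [← inv_neg, neg_sub]
  rw [h2]
  induction r with
  | zero => simp
  | succ r ih =>
    rw [Finset.sum_Icc_succ_top (by omega)]
    have h3 : ∑ j ∈ Finset.Icc 1 r, 1 / (N ^ (2 * j) * M ^ (2 * (r + 1 + 1) - 2 * j)) =
        (∑ j ∈ Finset.Icc 1 r, 1 / (N ^ (2 * j) * M ^ (2 * (r + 1) - 2 * j))) * (M ^ 2)⁻¹ := by
      rw [Finset.sum_mul]
      refine Finset.sum_congr rfl fun j hj => ?_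
      rw [Finset.mem_Icc] at hj
      have : 2 * (r + 1 + 1) - 2 * j = (2 * (r + 1) - 2 * j) + 2 := by omega
      rw [this, pow_add]
      field_simp
    rw [h3, ih]
    have h4 : 2 * (r + 1 + 1) - 2 * (r + 1) = 2 := by omega
    rw [h4, mul_add, pow_add, pow_add]
    field_simp
    ring

lemma summable_kernel (r : ℕ) (hr : 1 ≤ r) : Summable (kernel r) := by
  have hA : Summable fun m : ℤ => 1 / (m : ℝ) ^ 2 :=
    Real.summable_one_div_int_pow.mpr (by norm_num)
  have hB : Summable fun p : ℤ × ℤ => (1 / (p.1 : ℝ) ^ 2) * (1 / (p.2 : ℝ) ^ 2) :=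
    hA.mul_of_nonneg hA (fun _ => by positivity) (fun _ => by positivity)
  have hinj : Function.Injective
      (fun p : ℕ × ℕ => (((p.1 : ℤ) + 1, (p.2 : ℤ) - p.1) : ℤ × ℤ)) := by
    rintro ⟨a, b⟩ ⟨c, d⟩ h
    simp only [Prod.mk.injEq] at h ⊢
    omega
  refine Summable.of_norm_bounded (hB.comp_injective hinj) ?_
  rintro ⟨m, n⟩
  by_cases hmn : m = n
  · subst hmn
    simp [kernel]
  have hmn' : (n : ℝ) - m ≠ 0 := sub_ne_zero.mpr (by exact_mod_cast Ne.symm hmn)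
  simp only [kernel, Function.comp, norm_mul, norm_inv, Real.norm_eq_abs, Int.cast_add,
    Int.cast_sub, Int.cast_natCast, Int.cast_one, one_div]
  have hm : (0 : ℝ) ≤ m := by positivity
  have hn : (0 : ℝ) ≤ n := by positivity
  gcongr ?_⁻¹ * ?_⁻¹
  · rw [abs_of_pos (by positivity)]
    exact pow_le_pow_right₀ (by linarith) (by omega)
  · have e : ((n : ℝ) + 1) ^ 2 - ((m : ℝ) + 1) ^ 2 = (n - m) * (n + m + 2) := by ring
    rw [e, abs_mul, ← sq_abs, sq]
    refine mul_le_mul_of_nonneg_left ?_ (abs_nonneg _)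
    rw [abs_of_pos (by linarith : (0 : ℝ) < n + m + 2), abs_le]
    constructor <;> linarith

/-- Telescoping with step `k`. -/
lemma sum_range_sub_shift (u : ℕ → ℝ) (k N : ℕ) :
    ∑ n ∈ Finset.range N, (u n - u (n + k)) =
      ∑ i ∈ Finset.range k, u i - ∑ i ∈ Finset.range k, u (N + i) := by
  have h1 := Finset.sum_range_add u N k
  have h2 := Finset.sum_range_add u k N
  rw [Finset.sum_sub_distrib]
  rw [add_comm k N] at h2
  have h3 : ∑ n ∈ Finset.range N, u (n + k) = ∑ n ∈ Finset.range N, u (k + n) :=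
    Finset.sum_congr rfl fun n _ => by rw [add_comm]
  linarith

/-- The terms cancel in pairs about `i = m`, where the summand is `0⁻¹ = 0`. -/
lemma sum_symmetric_inv (m : ℕ) :
    ∑ i ∈ Finset.range (2 * (m + 1)), ((i : ℝ) - m)⁻¹ = ((m : ℝ) + 1)⁻¹ := by
  have h : 2 * (m + 1) = (2 * m + 1) + 1 := by ring
  rw [h, Finset.sum_range_succ]
  have h0 : ∑ i ∈ Finset.range (2 * m + 1), ((i : ℝ) - m)⁻¹ = 0 := by
    have hr := Finset.sum_range_reflect (fun i : ℕ => ((i : ℝ) - m)⁻¹) (2 * m + 1)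
    have : ∑ i ∈ Finset.range (2 * m + 1), (((2 * m + 1 - 1 - i : ℕ) : ℝ) - m)⁻¹ =
        - ∑ i ∈ Finset.range (2 * m + 1), ((i : ℝ) - m)⁻¹ := by
      rw [← Finset.sum_neg_distrib]
      refine Finset.sum_congr rfl fun i hi => ?_
      rw [Finset.mem_range] at hi
      rw [← inv_neg, Nat.add_sub_cancel, Nat.cast_sub (by omega)]
      push_cast
      congr 1
      ring
    linarith
  rw [h0]
  push_cast
  rw [zero_add]
  congr 1
  ring

lemma tsum_inv_sq_sub_sq (m : ℕ)
    (hs : Summable fun n : ℕ => (((n : ℝ) + 1) ^ 2 - ((m : ℝ) + 1) ^ 2)⁻¹) :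
    ∑' n : ℕ, (((n : ℝ) + 1) ^ 2 - ((m : ℝ) + 1) ^ 2)⁻¹ = 3 / 4 * (((m : ℝ) + 1) ^ 2)⁻¹ := by
  set M : ℝ := (m : ℝ) + 1 with hM
  have hMpos : 0 < M := by positivity
  let u : ℕ → ℝ := fun n => ((n : ℝ) - m)⁻¹
  -- At `n = m` the telescoping difference is `-1/(2M)` while the summand is `0`.
  have hterm : ∀ n : ℕ, (((n : ℝ) + 1) ^ 2 - M ^ 2)⁻¹ =
      (2 * M)⁻¹ * ((u n - u (n + 2 * (m + 1))) + if n = m then (2 * M)⁻¹ else 0) := by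
    intro n
    have hshift : u (n + 2 * (m + 1)) = ((n : ℝ) + 1 + M)⁻¹ := by
      simp only [u, hM]
      push_cast
      congr 1
      ring
    rw [hshift]
    by_cases hnm : n = m
    · subst hnm
      simp only [u, if_true, sub_self, inv_zero, ← hM]
      rw [← two_mul]
      ring
    · have h1 : (n : ℝ) - m ≠ 0 := sub_ne_zero.mpr (by exact_mod_cast hnm)
      have h2 : (n : ℝ) + 1 + M ≠ 0 := by positivity
      have h3 : ((n : ℝ) + 1) ^ 2 - M ^ 2 = (n - m) * (n + 1 + M) := by rw [hM]; ring
      simp only [u, if_neg hnm, add_zero]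
      rw [h3]
      field_simp
      rw [hM]
      ring
  have hu : Filter.Tendsto u Filter.atTop (nhds 0) := by
    refine Filter.Tendsto.inv_tendsto_atTop ?_
    exact Filter.tendsto_atTop_add_const_right _ _ tendsto_natCast_atTop_atTop
  have htail : Filter.Tendsto
      (fun N => ∑ i ∈ Finset.range (2 * (m + 1)), u (N + i)) Filter.atTop (nhds 0) := by
    have := tendsto_finsetSum (Finset.range (2 * (m + 1)))
      (fun i _ => hu.comp (Filter.tendsto_add_atTop_nat i))
    simpa using this
  have hpart : ∀ᶠ N in Filter.atTop,
      (2 * M)⁻¹ * ((M⁻¹ - ∑ i ∈ Finset.range (2 * (m + 1)), u (N + i)) + (2 * M)⁻¹) =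
      ∑ n ∈ Finset.range N, (((n : ℝ) + 1) ^ 2 - M ^ 2)⁻¹ := by
    filter_upwards [Filter.eventually_gt_atTop m] with N hN
    rw [Finset.sum_congr rfl fun n _ => hterm n, ← Finset.mul_sum, Finset.sum_add_distrib,
      sum_range_sub_shift, sum_symmetric_inv, Finset.sum_ite_eq', if_pos (Finset.mem_range.mpr hN)]
  have hlim := (((htail.const_sub M⁻¹).add_const (2 * M)⁻¹).const_mul (2 * M)⁻¹).congr' hpart
  rw [tendsto_nhds_unique hs.hasSum.tendsto_sum_nat hlim]
  field_simp
  ring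

lemma tsum_kernel (r : ℕ) (hr : 1 ≤ r) :
    ∑' p, kernel r p = 3 / 4 * rzeta (2 * (r + 1)) := by
  have hsum := summable_kernel r hr
  rw [hsum.tsum_prod]
  have hinner : ∀ m : ℕ, ∑' n : ℕ, kernel r (m, n) =
      3 / 4 * (1 / (((m + 1 : ℕ) : ℝ)) ^ (2 * (r + 1))) := by
    intro m
    have hm : (((m : ℝ) + 1) ^ (2 * r))⁻¹ ≠ 0 := by positivity
    have hs := (summable_mul_left_iff hm).mp (hsum.prod_factor m)
    simp only [kernel]
    rw [tsum_mul_left, tsum_inv_sq_sub_sq m hs, mul_add, pow_add]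
    push_cast
    field_simp
  have hz : Summable fun n : ℕ => 1 / (n : ℝ) ^ (2 * (r + 1)) :=
    Real.summable_one_div_nat_pow.mpr (by omega)
  rw [tsum_congr hinner, tsum_mul_left, rzeta, hz.tsum_eq_zero_add]
  simp

lemma sum_Ioo_eq_sum_range (φ : ℕ → ℝ) (n : ℕ) :
    ∑ m ∈ Finset.Ioo 0 (n + 1), φ m = ∑ m ∈ Finset.range n, φ (m + 1) := by
  rw [Finset.range_eq_Ico, Finset.sum_Ico_add' φ 0 n 1]
  rfl

theorem stmt3 (s : ℕ) (hs : 2 ≤ s) :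
    ∑ j ∈ Finset.Icc 1 (s - 1), dzeta (2 * j) (2 * s - 2 * j) = (3 / 4) * rzeta (2 * s) := by
  obtain ⟨r, rfl⟩ : ∃ r, s = r + 1 := ⟨s - 1, by omega⟩
  have hr : 1 ≤ r := by omega
  rw [Nat.add_sub_cancel, ← tsum_kernel r hr]
  have hK := summable_kernel r hr
  have hK' : Summable fun p : ℕ × ℕ => kernel r p.swap :=
    (Equiv.prodComm ℕ ℕ).summable_iff.mpr hK
  -- `L` is the symmetrized kernel restricted to pairs `(n, m)` with `m < n`.
  let F : ℕ × ℕ → ℝ := fun p => kernel r p + kernel r p.swap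
  let L : ℕ × ℕ → ℝ := Set.indicator {p | p.2 < p.1} F
  have hF : Summable F := hK.add hK'
  have hL : Summable L := hF.indicator _
  have hL' : Summable fun p : ℕ × ℕ => L p.swap :=
    (Equiv.prodComm ℕ ℕ).summable_iff.mpr hL
  have hFL : ∀ p, F p = L p + L p.swap := by
    rintro ⟨a, b⟩
    rcases lt_trichotomy a b with h | h | h
    · simp [L, F, h, h.not_gt, add_comm]
    · subst h
      simp [L, F, kernel_diag]
    · simp [L, F, h, h.not_gt]
  have hKL : ∑' p, kernel r p = ∑' p, L p := by
    have e1 : ∑' p, F p = ∑' p, kernel r p + ∑' p : ℕ × ℕ, kernel r p.swap := hK.tsum_add hK'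
    have e2 : ∑' p, F p = ∑' p, L p + ∑' p : ℕ × ℕ, L p.swap := by
      rw [tsum_congr hFL]
      exact hL.tsum_add hL'
    have e3 : ∑' p : ℕ × ℕ, kernel r p.swap = ∑' p, kernel r p :=
      (Equiv.prodComm ℕ ℕ).tsum_eq (kernel r)
    have e4 : ∑' p : ℕ × ℕ, L p.swap = ∑' p, L p := (Equiv.prodComm ℕ ℕ).tsum_eq L
    linarith
  let h : ℕ → ℕ → ℝ := fun j n =>
    ∑ m ∈ Finset.Ioo 0 n, 1 / ((n : ℝ) ^ (2 * j) * (m : ℝ) ^ (2 * (r + 1) - 2 * j))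
  have hrow : ∀ n, ∑ j ∈ Finset.Icc 1 r, h j (n + 1) = ∑' m, L (n, m) := by
    intro n
    rw [tsum_eq_sum (s := Finset.range n)]
    · simp only [h]
      rw [Finset.sum_comm, sum_Ioo_eq_sum_range]
      refine Finset.sum_congr rfl fun m hm => ?_
      rw [Finset.mem_range] at hm
      have hne : ((m + 1 : ℕ) : ℝ) ≠ ((n + 1 : ℕ) : ℝ) := by
        exact_mod_cast (by omega : m + 1 ≠ n + 1)
      rw [geometric_sum _ _ (by positivity) (by positivity) hne]
      simp [L, F, hm, kernel, add_comm]
    · intro m hm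
      rw [Finset.mem_range] at hm
      simp [L, hm]
  have hrows : Summable fun n => ∑ j ∈ Finset.Icc 1 r, h j (n + 1) := by
    simp only [hrow]
    exact hL.prod
  have hnn : ∀ j n, 0 ≤ h j n := fun j n => Finset.sum_nonneg fun m _ => by positivity
  have hsj : ∀ j ∈ Finset.Icc 1 r, Summable fun n => h j (n + 1) := fun j hj =>
    Summable.of_nonneg_of_le (fun n => hnn j _)
      (fun n => Finset.single_le_sum (f := fun j => h j (n + 1)) (fun i _ => hnn i _) hj) hrows
  have hdz : ∀ j ∈ Finset.Icc 1 r,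
      dzeta (2 * j) (2 * (r + 1) - 2 * j) = ∑' n, h j (n + 1) := by
    intro j hj
    have h1 : Summable (h j) := (summable_nat_add_iff 1).mp (hsj j hj)
    change ∑' n, h j n = _
    rw [h1.tsum_eq_zero_add]
    simp [h]
  rw [hKL, hL.tsum_prod, Finset.sum_congr rfl hdz, ← Summable.tsum_finsetSum hsj]
  exact tsum_congr hrow
end

section
/- For all integers a ≥ 0 and s ≥ 3, ∑_{j=2}^{s-1} W(s-j, a, j) = (-1)^a ζ(s+a) + (-1)^a ζ(s+a-1, 1) - ζ(s-1, a+1) - ∑_{i=2}^{a+1} (-1)^{i+a} ζ(i) ζ(s+a-i), where the last sum is empty when a = 0. -/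
/-!
Write `N = n + m`. Since `1/n - 1/N = m/(nN)`, the sum over `j` of `1/(n^(s-j) N^j)` is geometric
and equals `1/(m N n^(s-2)) - 1/(m N^(s-1))`; hence the left-hand side is
`W(s-2, a+1, 1) - ζ(s-1, a+1)` (`sum_wTerm`, `hasSum_dzeta`).

It remains to evaluate `W(p, a+1, 1)` for `p ≥ 1` (`tsum_wTerm_one`), by induction on `a`.
The partial fraction `1/(mN) = (1/n)(1/m - 1/N)` yields
`W(p, a+2, 1) = ζ(a+2) ζ(p+1) - W(p+1, a+1, 1)`, and in the base case the inner sum over `m`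
telescopes: `∑_m 1/(m(n+m)) = H_n/n`, so `W(p, 1, 1) = ζ(p+2) + ζ(p+1, 1)`.

All series involved are dominated by `∑ 1/(n m N)`, which converges because
`1/(n m N) ≤ (n m)^(-3/2)`. Double series are summed over `ℕ × ℕ`, with `n` and `m` shifted by one.
-/

open scoped BigOperators

/-! ### Convergence -/

/-- The summand of `W(r, b, t)` at `n = x.1 + 1`, `m = x.2 + 1`. -/
noncomputable def wTerm (r b t : ℕ) (x : ℕ × ℕ) : ℝ :=
  1 / (((x.1 : ℝ) + 1) ^ r * ((x.2 : ℝ) + 1) ^ b * (((x.1 : ℝ) + 1) + ((x.2 : ℝ) + 1)) ^ t)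

theorem wTerm_nonneg (r b t : ℕ) (x : ℕ × ℕ) : 0 ≤ wTerm r b t x := by
  unfold wTerm; positivity

theorem summable_one_div_succ_rpow {p : ℝ} (hp : 1 < p) :
    Summable fun n : ℕ => 1 / ((n : ℝ) + 1) ^ p := by
  have h := (summable_nat_add_iff 1).2 (Real.summable_one_div_nat_rpow.2 hp)
  simpa using h

theorem summable_one_div_succ_pow {p : ℕ} (hp : 2 ≤ p) :
    Summable fun n : ℕ => 1 / ((n : ℝ) + 1) ^ p := by
  have h := (summable_nat_add_iff 1).2 (Real.summable_one_div_nat_pow.2 hp)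
  simpa using h

theorem summable_wTerm_one_one_one : Summable (wTerm 1 1 1) := by
  have h := summable_one_div_succ_rpow (p := 3 / 2) (by norm_num)
  refine Summable.of_nonneg_of_le (wTerm_nonneg 1 1 1) ?_
    (h.mul_of_nonneg h (fun n => by positivity) (fun n => by positivity))
  rintro ⟨i, j⟩
  have key : ∀ y : ℝ, 0 ≤ y → y ^ (3 / 2 : ℝ) = y * √y := by
    intro y hy
    rw [Real.sqrt_eq_rpow, show (3 / 2 : ℝ) = 1 + 1 / 2 by norm_num,
      Real.rpow_add_of_nonneg hy (by norm_num) (by norm_num), Real.rpow_one]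
  have hi : (0 : ℝ) < (i : ℝ) + 1 := by positivity
  have hj : (0 : ℝ) < (j : ℝ) + 1 := by positivity
  simp only [wTerm, pow_one, key _ hi.le, key _ hj.le]
  rw [one_div_mul_one_div]
  have hs : √((i : ℝ) + 1) * √((j : ℝ) + 1) ≤ ((i : ℝ) + 1) + ((j : ℝ) + 1) := by
    nlinarith [Real.sq_sqrt hi.le, Real.sq_sqrt hj.le,
      sq_nonneg (√((i : ℝ) + 1) - √((j : ℝ) + 1))]
  apply one_div_le_one_div_of_le (by positivity)
  calc ((i : ℝ) + 1) * √((i : ℝ) + 1) * (((j : ℝ) + 1) * √((j : ℝ) + 1))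
      = ((i : ℝ) + 1) * ((j : ℝ) + 1) * (√((i : ℝ) + 1) * √((j : ℝ) + 1)) := by ring
    _ ≤ _ := by gcongr

theorem summable_wTerm_of_le {r b t : ℕ}
    (h : ∀ n m : ℝ, 1 ≤ n → 1 ≤ m → n * m * (n + m) ≤ n ^ r * m ^ b * (n + m) ^ t) :
    Summable (wTerm r b t) := by
  refine Summable.of_nonneg_of_le (wTerm_nonneg r b t) ?_ summable_wTerm_one_one_one
  rintro ⟨i, j⟩
  simp only [wTerm, pow_one]
  exact one_div_le_one_div_of_le (by positivity) (h _ _ (by simp) (by simp))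

theorem summable_wTerm {r b t : ℕ} (hr : 1 ≤ r) (hb : 1 ≤ b) (ht : 1 ≤ t) :
    Summable (wTerm r b t) := by
  refine summable_wTerm_of_le fun n m hn hm => ?_
  gcongr
  · exact le_self_pow₀ hn (by omega)
  · exact le_self_pow₀ hm (by omega)
  · exact le_self_pow₀ (by linarith) (by omega)

theorem summable_wTerm_left {r t : ℕ} (b : ℕ) (hr : 1 ≤ r) (ht : 2 ≤ t) :
    Summable (wTerm r b t) := by
  refine summable_wTerm_of_le fun n m hn hm => ?_
  have h1 : n ≤ n ^ r := le_self_pow₀ hn (by omega)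
  have h2 : (1 : ℝ) ≤ m ^ b := one_le_pow₀ hm
  have h3 : (n + m) ^ 2 ≤ (n + m) ^ t := pow_le_pow_right₀ (by linarith) ht
  calc n * m * (n + m) = n * 1 * (m * (n + m)) := by ring
    _ ≤ n ^ r * m ^ b * (n + m) ^ 2 := by
        gcongr
        nlinarith
    _ ≤ _ := by gcongr

theorem summable_wTerm_right {b t : ℕ} (hb : 1 ≤ b) (ht : 2 ≤ t) :
    Summable (wTerm 0 b t) := by
  refine summable_wTerm_of_le fun n m hn hm => ?_
  have h1 : m ≤ m ^ b := le_self_pow₀ hm (by omega)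
  have h3 : (n + m) ^ 2 ≤ (n + m) ^ t := pow_le_pow_right₀ (by linarith) ht
  calc n * m * (n + m) = m * (n * (n + m)) := by ring
    _ ≤ m ^ b * (n + m) ^ 2 := by
        gcongr
        nlinarith
    _ ≤ n ^ 0 * m ^ b * (n + m) ^ t := by
        rw [pow_zero, one_mul]
        gcongr

/-! ### Zeta values as sums over `ℕ × ℕ` -/

theorem wzeta_eq_tsum {r b t : ℕ} (h : Summable (wTerm r b t)) :
    wzeta r b t = ∑' x, wTerm r b t x := by
  rw [h.tsum_prod, wzeta]
  rw [tsum_pnat_eq_tsum_succ (f := fun n : ℕ => ∑' m : ℕ+,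
    1 / ((n : ℝ) ^ r * (m : ℝ) ^ b * ((n : ℝ) + (m : ℝ)) ^ t))]
  refine tsum_congr fun i => ?_
  rw [tsum_pnat_eq_tsum_succ (f := fun m : ℕ =>
    1 / (((i + 1 : ℕ) : ℝ) ^ r * (m : ℝ) ^ b * (((i + 1 : ℕ) : ℝ) + (m : ℝ)) ^ t))]
  simp [wTerm]

theorem rzeta_eq_tsum {p : ℕ} (hp : 2 ≤ p) :
    rzeta p = ∑' n : ℕ, 1 / ((n : ℝ) + 1) ^ p := by
  rw [rzeta, (Real.summable_one_div_nat_pow.2 hp).tsum_eq_zero_add]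
  simp [show p ≠ 0 by omega]

theorem sum_Ioo_succ (f : ℕ → ℝ) (k : ℕ) :
    ∑ m ∈ Finset.Ioo 0 (k + 1), f m = ∑ j ∈ Finset.range k, f (j + 1) := by
  rw [Finset.range_eq_Ico, Finset.sum_Ico_add' f 0 k 1]
  rfl

/-- Grouping the terms `1/(m^b N^c)`, `N = n + m`, by the value of `N` gives the double zeta
value. -/
theorem hasSum_dzeta {b c : ℕ} (h : Summable (wTerm 0 b c)) :
    HasSum (fun n : ℕ => ∑ m ∈ Finset.Ioo 0 n, 1 / ((n : ℝ) ^ c * (m : ℝ) ^ b))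
      (∑' x, wTerm 0 b c x) := by
  have h1 := (Finset.HasAntidiagonal.sigmaAntidiagonalEquivProd (A := ℕ)).hasSum_iff.2 h.hasSum
  have h2 := h1.sigma (fun k => hasSum_fintype _)
  rw [← hasSum_nat_add_iff' 2]
  simp only [Finset.sum_range_succ, Finset.sum_range_zero]
  have e1 : Finset.Ioo 0 1 = (∅ : Finset ℕ) := rfl
  simp only [e1, Finset.Ioo_self, Finset.sum_empty, add_zero, sub_zero]
  convert! h2 using 2 with k
  rw [sum_Ioo_succ]
  have e2 := Finset.sum_coe_sort (Finset.HasAntidiagonal.antidiagonal k) (wTerm 0 b c)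
  refine Eq.trans ?_ e2.symm
  rw [← Finset.Nat.sum_antidiagonal_swap, Finset.Nat.sum_antidiagonal_eq_sum_range_succ_mk]
  refine Finset.sum_congr rfl fun j hj => ?_
  have hj' : j ≤ k := by simpa [Nat.lt_succ_iff] using hj
  simp only [wTerm, Prod.swap, Nat.cast_sub hj', pow_zero, one_mul]
  rw [mul_comm]
  push_cast
  congr 3
  ring

theorem dzeta_eq_tsum {b c : ℕ} (h : Summable (wTerm 0 b c)) :
    dzeta c b = ∑' x, wTerm 0 b c x :=
  (hasSum_dzeta h).tsum_eq

/-! ### Evaluation of `W(p, a+1, 1)` -/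

theorem hasSum_sub_succ (k : ℕ) :
    HasSum (fun j : ℕ => 1 / ((j : ℝ) + 1 + k) - 1 / ((j : ℝ) + 1 + (k + 1 : ℕ)))
      (1 / ((k : ℝ) + 1)) := by
  rw [hasSum_iff_tendsto_nat_of_nonneg]
  · have h1 : ∀ n : ℕ, ∑ j ∈ Finset.range n,
        (1 / ((j : ℝ) + 1 + k) - 1 / ((j : ℝ) + 1 + (k + 1 : ℕ)))
        = 1 / ((k : ℝ) + 1) - 1 / (((n + k : ℕ) : ℝ) + 1) := by
      intro n
      have h := Finset.sum_range_sub' (fun j : ℕ => 1 / ((j : ℝ) + 1 + k)) n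
      rw [show 1 / ((k : ℝ) + 1) - 1 / (((n + k : ℕ) : ℝ) + 1)
        = 1 / (((0 : ℕ) : ℝ) + 1 + k) - 1 / ((n : ℝ) + 1 + k) by push_cast; ring_nf, ← h]
      refine Finset.sum_congr rfl fun j _ => ?_
      push_cast
      ring_nf
    simp_rw [h1]
    have h2 := (tendsto_one_div_add_atTop_nhds_zero_nat (𝕜 := ℝ)).comp
      (Filter.tendsto_add_atTop_nat k)
    simpa using h2.const_sub (1 / ((k : ℝ) + 1))
  · intro j
    rw [sub_nonneg]
    apply one_div_le_one_div_of_le (by positivity)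
    push_cast
    linarith

/-- `∑_{m ≥ 1} (1/m - 1/(m+k)) = H_k`. -/
theorem hasSum_harmonic (k : ℕ) :
    HasSum (fun j : ℕ => 1 / ((j : ℝ) + 1) - 1 / ((j : ℝ) + 1 + k))
      (∑ j ∈ Finset.range k, 1 / ((j : ℝ) + 1)) := by
  induction k with
  | zero => simp
  | succ k ih =>
    rw [Finset.sum_range_succ]
    convert ih.add (hasSum_sub_succ k) using 2 with j
    ring

theorem tsum_wTerm_one_one {p : ℕ} (hp : 1 ≤ p) :
    ∑' x, wTerm p 1 1 x = rzeta (p + 2) + dzeta (p + 1) 1 := by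
  have hS : Summable (wTerm p 1 1) := summable_wTerm hp le_rfl le_rfl
  have hD := hasSum_dzeta (summable_wTerm_right (b := 1) (t := p + 1) le_rfl (by omega))
  rw [hS.tsum_prod, rzeta_eq_tsum (by omega), dzeta, hD.summable.tsum_eq_zero_add]
  have hD' := (summable_nat_add_iff 1).2 hD.summable
  simp only [Finset.Ioo_self, Finset.sum_empty, zero_add]
  rw [← (summable_one_div_succ_pow (by omega)).tsum_add hD']
  refine tsum_congr fun i => ?_
  have h := ((hasSum_harmonic (i + 1)).mul_left (1 / ((i : ℝ) + 1) ^ (p + 1)))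
  refine HasSum.tsum_eq ?_
  convert! h using 1
  · funext j
    have hi : ((i : ℝ) + 1) ≠ 0 := by positivity
    have hj : ((j : ℝ) + 1) ≠ 0 := by positivity
    have hij : ((j : ℝ) + 1 + (i + 1)) ≠ 0 := by positivity
    have hij' : ((i : ℝ) + 1 + (j + 1)) ≠ 0 := by positivity
    simp only [wTerm, pow_one]
    push_cast
    field_simp
    ring
  · rw [sum_Ioo_succ, Finset.sum_range_succ, mul_add, Finset.mul_sum, add_comm]
    congr 1
    · refine Finset.sum_congr rfl fun j _ => ?_
      push_cast
      rw [pow_one, one_div_mul_one_div]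
    · rw [one_div_mul_one_div, ← pow_succ]

/-- The partial fraction `1/(mN) = (1/n)(1/m - 1/N)` lowers the second argument. -/
theorem tsum_wTerm_succ {p b : ℕ} (hp : 1 ≤ p) (hb : 1 ≤ b) :
    ∑' x, wTerm p (b + 1) 1 x
      = rzeta (b + 1) * rzeta (p + 1) - ∑' x, wTerm (p + 1) b 1 x := by
  have h1 := summable_one_div_succ_pow (p := p + 1) (by omega)
  have h2 := summable_one_div_succ_pow (p := b + 1) (by omega)
  have h3 := h1.mul_of_nonneg h2 (fun n => by positivity) (fun n => by positivity)
  rw [mul_comm, rzeta_eq_tsum (by omega), rzeta_eq_tsum (by omega), h1.tsum_mul_tsum h2 h3,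
    ← h3.tsum_sub (summable_wTerm (by omega) hb le_rfl)]
  refine tsum_congr ?_
  rintro ⟨i, j⟩
  have hi : ((i : ℝ) + 1) ≠ 0 := by positivity
  have hj : ((j : ℝ) + 1) ≠ 0 := by positivity
  have hij' : ((i : ℝ) + 1 + (j + 1)) ≠ 0 := by positivity
  simp only [wTerm, pow_one]
  field_simp
  ring

theorem tsum_wTerm_one (a : ℕ) : ∀ p : ℕ, 1 ≤ p →
    ∑' x, wTerm p (a + 1) 1 x
      = (-1 : ℝ) ^ a * rzeta (p + 2 + a) + (-1 : ℝ) ^ a * dzeta (p + 1 + a) 1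
        - ∑ i ∈ Finset.Icc 2 (a + 1), (-1 : ℝ) ^ (i + a) * rzeta i * rzeta (p + 2 + a - i) := by
  induction a with
  | zero =>
    intro p hp
    simpa using tsum_wTerm_one_one hp
  | succ a ih =>
    intro p hp
    rw [tsum_wTerm_succ hp (by omega), ih (p + 1) (by omega),
      Finset.sum_Icc_succ_top (by omega : 2 ≤ a + 1 + 1)]
    have e1 : p + 2 + (a + 1) - (a + 1 + 1) = p + 1 := by omega
    have e2 : (-1 : ℝ) ^ (a + 1 + 1 + (a + 1)) = -1 := Odd.neg_one_pow ⟨a + 1, by ring⟩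
    have e3 : ∑ i ∈ Finset.Icc 2 (a + 1),
          (-1 : ℝ) ^ (i + (a + 1)) * rzeta i * rzeta (p + 2 + (a + 1) - i)
        = -∑ i ∈ Finset.Icc 2 (a + 1),
          (-1 : ℝ) ^ (i + a) * rzeta i * rzeta (p + 1 + 2 + a - i) := by
      rw [← Finset.sum_neg_distrib]
      refine Finset.sum_congr rfl fun i _ => ?_
      rw [show p + 2 + (a + 1) = p + 1 + 2 + a by ring]
      ring
    rw [e1, e2, e3, show p + 1 + 2 + a = p + 2 + (a + 1) by ring,
      show p + 1 + 1 + a = p + 1 + (a + 1) by ring]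
    ring

/-! ### The sum over `j` -/

/-- The geometric sum over `j`, with exponents shifted: `s = p + 2`, `j = k + 2`. -/
theorem sum_wTerm (a p : ℕ) (x : ℕ × ℕ) :
    ∑ k ∈ Finset.range p, wTerm (p - k) a (k + 2) x
      = wTerm p (a + 1) 1 x - wTerm 0 (a + 1) (p + 1) x := by
  obtain ⟨i, j⟩ := x
  simp only [wTerm]
  have hi : (0 : ℝ) < (i : ℝ) + 1 := by positivity
  have hj : (0 : ℝ) < (j : ℝ) + 1 := by positivity
  generalize (i : ℝ) + 1 = n at hi
  generalize (j : ℝ) + 1 = m at hj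
  induction p with
  | zero => simp
  | succ p ih =>
    rw [Finset.sum_range_succ]
    have h : ∑ k ∈ Finset.range p, 1 / (n ^ (p + 1 - k) * m ^ a * (n + m) ^ (k + 2))
        = 1 / n * ∑ k ∈ Finset.range p, 1 / (n ^ (p - k) * m ^ a * (n + m) ^ (k + 2)) := by
      rw [Finset.mul_sum]
      refine Finset.sum_congr rfl fun k hk => ?_
      have hk' : k < p := Finset.mem_range.1 hk
      rw [show p + 1 - k = (p - k) + 1 by omega, one_div_mul_one_div]
      ring_nf
    have hnm : n + m ≠ 0 := by positivity
    rw [h, ih, show p + 1 - p = 1 by omega]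
    field_simp
    ring

theorem stmt5 (a s : ℕ) (hs : 3 ≤ s) :
    ∑ j ∈ Finset.Icc 2 (s - 1), wzeta (s - j) a j
      = (-1 : ℝ) ^ a * rzeta (s + a) + (-1 : ℝ) ^ a * dzeta (s + a - 1) 1
        - dzeta (s - 1) (a + 1)
        - ∑ i ∈ Finset.Icc 2 (a + 1), (-1 : ℝ) ^ (i + a) * rzeta i * rzeta (s + a - i) := by
  obtain ⟨p, rfl⟩ : ∃ p, s = p + 2 := ⟨s - 2, by omega⟩
  have hp : 1 ≤ p := by omega
  have hW : Summable (wTerm p (a + 1) 1) := summable_wTerm hp (by omega) le_rfl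
  have hD : Summable (wTerm 0 (a + 1) (p + 1)) := summable_wTerm_right (by omega) (by omega)
  have hL : ∑ j ∈ Finset.Icc 2 (p + 2 - 1), wzeta (p + 2 - j) a j
      = ∑ k ∈ Finset.range p, ∑' x, wTerm (p - k) a (k + 2) x := by
    rw [show Finset.Icc 2 (p + 2 - 1) = Finset.Ico (0 + 2) (p + 2) by ext; simp; omega,
      ← Finset.sum_Ico_add' (fun j => wzeta (p + 2 - j) a j), ← Finset.range_eq_Ico]
    refine Finset.sum_congr rfl fun k hk => ?_
    have hk' : k < p := Finset.mem_range.1 hk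
    rw [show p + 2 - (k + 2) = p - k by omega,
      wzeta_eq_tsum (summable_wTerm_left a (by omega) (by omega))]
  have hS : ∀ k ∈ Finset.range p, Summable (wTerm (p - k) a (k + 2)) := fun k hk => by
    have hk' : k < p := Finset.mem_range.1 hk
    exact summable_wTerm_left a (by omega) (by omega)
  rw [hL, ← Summable.tsum_finsetSum hS]
  simp_rw [sum_wTerm]
  rw [hW.tsum_sub hD, ← dzeta_eq_tsum hD, tsum_wTerm_one a p hp,
    show p + 2 + a - 1 = p + 1 + a by omega, show p + 2 - 1 = p + 1 by omega]
  ring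
end

section
/- For every integer s ≥ 3, ∑_{j=2}^{s} W(s-j, 1, j) = ζ(2, s-1). -/
/-!
Put `k = s - 1 ≥ 2` and, for positive integers `n`, `m`, write `N = n + m`. Since
`1/n - 1/N = m/(nN)`, summing a finite geometric progression gives the pointwise identity
`∑_j 1/(n^(s-j) m N^j) + 1/(m² N^k) + 1/(n^k m N) = 1/(n^k m²) + 1/(m N^(k+1))`.
Every term is at most `1/(n² m²)`, so it may be summed over all pairs `(n, m)`, term by term.
Two classical evaluations then finish the proof:

* splitting `ζ(k) ζ(2)` according to `m < n`, `m = n`, `m > n` (`stuffle`) gives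
  `∑ 1/(n^k m²) = ∑ 1/(m² N^k) + ζ(k+2) + ζ(2,k)`;
* the telescoping sum `∑_m n/(m(n+m)) = H_n` gives (`tsum_harmonic`)
  `∑ 1/(n^k m N) = ∑_n H_n/n^(k+1) = ζ(k+2) + ∑ 1/(m N^(k+1))`.

Substituting both into the summed identity cancels everything except `ζ(2,k)`.
-/


open scoped BigOperators

/-- The majorant used for all double series below. -/
lemma summable_base :
    Summable (fun p : ℕ+ × ℕ+ => 1 / ((p.1 : ℝ) ^ 2 * (p.2 : ℝ) ^ 2)) := by
  have h : Summable (fun n : ℕ+ => 1 / ((n : ℕ) : ℝ) ^ 2) :=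
    (Real.summable_one_div_nat_pow.2 (by norm_num : 1 < 2)).comp_injective PNat.coe_injective
  refine (h.mul_of_nonneg h (fun _ => by positivity) (fun _ => by positivity)).congr ?_
  intro p
  simp [mul_comm]

lemma one_le_cast (n : ℕ+) : (1 : ℝ) ≤ (n : ℝ) := by exact_mod_cast one_le (a := n)

lemma summable_of_le {f : ℕ+ × ℕ+ → ℝ}
    (h : ∀ n m : ℕ+, (n : ℝ) ^ 2 * (m : ℝ) ^ 2 ≤ f (n, m)) :
    Summable (fun p => 1 / f p) := by
  have hpos : ∀ p : ℕ+ × ℕ+, 0 < (p.1 : ℝ) ^ 2 * (p.2 : ℝ) ^ 2 := by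
    intro p
    have h1 := one_le_cast p.1
    have h2 := one_le_cast p.2
    positivity
  refine Summable.of_nonneg_of_le (fun p => ?_) (fun p => ?_) summable_base
  · exact one_div_nonneg.2 ((hpos p).le.trans (h p.1 p.2))
  · exact one_div_le_one_div_of_le (hpos p) (h p.1 p.2)

/-- A double series over `0 < m < N`, reindexed by the pair `(m, N - m)`. -/
lemma hasSum_triangle (G : ℕ → ℕ → ℝ)
    (hG : Summable (fun p : ℕ+ × ℕ+ => G (p.1 + p.2) p.1)) :
    HasSum (fun N : ℕ => ∑ m ∈ Finset.Ioo 0 N, G N m)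
      (∑' p : ℕ+ × ℕ+, G (p.1 + p.2) p.1) := by
  let g : ℕ+ × ℕ+ → ℕ × ℕ := fun p => ((p.1 : ℕ) + p.2, (p.1 : ℕ))
  have hg : Function.Injective g := by
    rintro ⟨a, b⟩ ⟨c, d⟩ h
    simp only [g, Prod.mk.injEq] at h
    have h1 : a = c := PNat.coe_injective h.2
    have h2 : b = d := PNat.coe_injective (by omega)
    rw [h1, h2]
  let F : ℕ × ℕ → ℝ := fun q => if q.2 ∈ Finset.Ioo 0 q.1 then G q.1 q.2 else 0
  have hF : ∀ q, q ∉ Set.range g → F q = 0 := by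
    rintro ⟨N, m⟩ hq
    refine if_neg fun hm => hq ?_
    simp only [Finset.mem_Ioo] at hm
    refine ⟨(⟨m, hm.1⟩, ⟨N - m, by omega⟩), ?_⟩
    simp only [g, PNat.mk_coe, Prod.mk.injEq, and_true]
    omega
  have hcomp : F ∘ g = fun p : ℕ+ × ℕ+ => G (p.1 + p.2) p.1 := by
    funext p
    have h1 := p.1.pos
    have h2 := p.2.pos
    simp only [F, g, Function.comp]
    exact if_pos (Finset.mem_Ioo.2 ⟨h1, by omega⟩)
  have hsum : HasSum F (∑' p : ℕ+ × ℕ+, G (p.1 + p.2) p.1) := by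
    rw [← hg.hasSum_iff hF, hcomp]
    exact hG.hasSum
  refine hsum.prod_fiberwise fun N => ?_
  have := hasSum_sum_of_ne_finset_zero (f := fun m => F (N, m)) (s := Finset.Ioo 0 N)
    (L := SummationFilter.unconditional ℕ)
    (fun m hm => if_neg hm)
  rwa [Finset.sum_congr rfl (fun m hm => if_pos hm)] at this

/-- Splitting a sum over all pairs into the regions above, on and below the diagonal. -/
lemma tsum_split (f : ℕ+ × ℕ+ → ℝ) (hf : Summable f) :
    ∑' p, f p = ∑' p : ℕ+ × ℕ+, f (p.1 + p.2, p.2) + ∑' n : ℕ+, f (n, n)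
      + ∑' p : ℕ+ × ℕ+, f (p.1, p.1 + p.2) := by
  let g1 : ℕ+ × ℕ+ → ℕ+ × ℕ+ := fun p => (p.1 + p.2, p.2)
  let g2 : ℕ+ → ℕ+ × ℕ+ := fun n => (n, n)
  let g3 : ℕ+ × ℕ+ → ℕ+ × ℕ+ := fun p => (p.1, p.1 + p.2)
  have i1 : Function.Injective g1 := by
    rintro ⟨a, b⟩ ⟨c, d⟩ h
    simp only [g1, Prod.mk.injEq] at h
    obtain ⟨h1, rfl⟩ := h
    simpa using h1
  have i2 : Function.Injective g2 := fun a b h => congrArg Prod.fst h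
  have i3 : Function.Injective g3 := by
    rintro ⟨a, b⟩ ⟨c, d⟩ h
    simp only [g3, Prod.mk.injEq] at h
    obtain ⟨rfl, h1⟩ := h
    simpa using h1
  have r1 : Set.range g1 = {p | p.2 < p.1} := by
    ext ⟨a, b⟩
    simp only [g1, Set.mem_range, Set.mem_ofPred_eq, Prod.exists, Prod.mk.injEq]
    constructor
    · rintro ⟨c, d, rfl, rfl⟩
      exact PNat.lt_add_left d c
    · intro h
      exact ⟨a - b, b, by rw [add_comm]; exact PNat.add_sub_of_lt h, rfl⟩
  have r2 : Set.range g2 = {p | p.1 = p.2} := by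
    ext ⟨a, b⟩
    simp [g2]
  have r3 : Set.range g3 = {p | p.1 < p.2} := by
    ext ⟨a, b⟩
    simp only [g3, Set.mem_range, Set.mem_ofPred_eq, Prod.exists, Prod.mk.injEq]
    constructor
    · rintro ⟨c, d, rfl, rfl⟩
      exact PNat.lt_add_right c d
    · intro h
      exact ⟨a, b - a, rfl, PNat.add_sub_of_lt h⟩
  have s1 := (hf.comp_injective i1).hasSum
  have s2 := (hf.comp_injective i2).hasSum
  have s3 := (hf.comp_injective i3).hasSum
  rw [← i1.hasSum_range_iff, r1] at s1
  replace s1 := hasSum_subtype_iff_indicator.1 s1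
  rw [← i2.hasSum_range_iff, r2] at s2
  replace s2 := hasSum_subtype_iff_indicator.1 s2
  rw [← i3.hasSum_range_iff, r3] at s3
  replace s3 := hasSum_subtype_iff_indicator.1 s3
  have key := (s1.add s2).add s3
  have e : f = fun p => Set.indicator {p | p.2 < p.1} f p + Set.indicator {p | p.1 = p.2} f p
      + Set.indicator {p | p.1 < p.2} f p := by
    funext p
    rcases lt_trichotomy p.1 p.2 with h | h | h
    · simp [h, h.not_gt, h.ne]
    · simp [h]
    · simp [h, h.not_gt, h.ne']
  rw [← e] at key
  exact key.tsum_eq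

/-- The telescoping series `∑_{m ≥ 1} (1/m - 1/(n+m)) = H_n`. -/
lemma hasSum_telescope_s6 (n : ℕ) :
    HasSum (fun m : ℕ => 1 / ((m : ℝ) + 1) - 1 / ((m : ℝ) + 1 + n))
      (∑ i ∈ Finset.range n, 1 / ((i : ℝ) + 1)) := by
  induction n with
  | zero => simp
  | succ n ih =>
    have h : HasSum (fun m : ℕ => 1 / ((m : ℝ) + 1 + n) - 1 / ((m : ℝ) + 1 + (n + 1)))
        (1 / ((n : ℝ) + 1)) := by
      rw [hasSum_iff_tendsto_nat_of_nonneg]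
      · have hs : ∀ M : ℕ, ∑ m ∈ Finset.range M,
            (1 / ((m : ℝ) + 1 + n) - 1 / ((m : ℝ) + 1 + (n + 1)))
            = 1 / ((n : ℝ) + 1) - 1 / (((M + n : ℕ) : ℝ) + 1) := by
          intro M
          have := Finset.sum_range_sub' (fun m : ℕ => 1 / ((m : ℝ) + 1 + n)) M
          push_cast at this ⊢
          rw [show (1 / ((n : ℝ) + 1) - 1 / ((M : ℝ) + n + 1))
            = 1 / ((0 : ℝ) + 1 + n) - 1 / ((M : ℝ) + 1 + n) by ring_nf, ← this]
          refine Finset.sum_congr rfl fun m _ => ?_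
          ring_nf
        simp_rw [hs]
        have := (tendsto_one_div_add_atTop_nhds_zero_nat (𝕜 := ℝ)).comp
          (Filter.tendsto_add_atTop_nat n)
        simpa [Function.comp_def] using this.const_sub (1 / ((n : ℝ) + 1))
      · intro m
        rw [sub_nonneg]
        apply one_div_le_one_div_of_le <;> first | positivity | linarith
    rw [Finset.sum_range_succ]
    convert ih.add h using 1
    funext m
    push_cast
    ring

lemma hasSum_inner (n : ℕ+) :
    HasSum (fun m : ℕ+ => 1 / ((m : ℝ) * ((n : ℝ) + m)))
      (1 / (n : ℝ) * (∑ i ∈ Finset.Ioo 0 (n : ℕ), 1 / (i : ℝ) + 1 / (n : ℝ))) := by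
  have h := (hasSum_telescope_s6 n).mul_left (1 / (n : ℝ))
  have e : ∑ i ∈ Finset.range (n : ℕ), 1 / ((i : ℝ) + 1)
      = ∑ i ∈ Finset.Ioo 0 (n : ℕ), 1 / (i : ℝ) + 1 / (n : ℝ) := by
    obtain ⟨k, hk⟩ : ∃ k, (n : ℕ) = k + 1 := ⟨n - 1, by have := n.pos; omega⟩
    rw [hk, Finset.sum_range_succ]
    congr 1
    · have := Finset.sum_Ico_add' (fun i : ℕ => 1 / (i : ℝ)) 0 k 1
      rw [show Finset.Ioo 0 (k + 1) = Finset.Ico (0 + 1) (k + 1) from rfl, ← this]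
      simp
    · push_cast; rfl
  rw [e] at h
  rw [← Equiv.pnatEquivNat.symm.hasSum_iff]
  convert h using 1
  · rfl
  funext m
  have h1 := one_le_cast n
  simp only [Function.comp, Equiv.pnatEquivNat_symm_apply, Nat.succPNat_coe, Nat.cast_succ]
  field_simp
  ring

/-- The stuffle decomposition `ζ(k) ζ(2) = ∑ 1/(m² N^k) + ζ(k+2) + ζ(2,k)`. -/
lemma stuffle (k : ℕ) (hk : 2 ≤ k) :
    ∑' p : ℕ+ × ℕ+, 1 / ((p.1 : ℝ) ^ k * (p.2 : ℝ) ^ 2)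
      = ∑' p : ℕ+ × ℕ+, 1 / (((p.1 : ℝ) + p.2) ^ k * (p.2 : ℝ) ^ 2)
        + ∑' n : ℕ+, 1 / (n : ℝ) ^ (k + 2)
        + ∑' p : ℕ+ × ℕ+, 1 / ((p.1 : ℝ) ^ k * ((p.1 : ℝ) + p.2) ^ 2) := by
  have h := tsum_split (fun p => 1 / ((p.1 : ℝ) ^ k * (p.2 : ℝ) ^ 2))
    (summable_of_le (f := fun p => (p.1 : ℝ) ^ k * (p.2 : ℝ) ^ 2) fun n m =>
      mul_le_mul_of_nonneg_right (pow_le_pow_right₀ (one_le_cast n) hk) (by positivity))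
  simpa [pow_add] using h

lemma summable_D (k : ℕ) (hk : 2 ≤ k) :
    Summable (fun p : ℕ+ × ℕ+ => 1 / (((p.1 : ℝ) + p.2) ^ (k + 1) * (p.1 : ℝ))) := by
  refine summable_of_le (f := fun p => ((p.1 : ℝ) + p.2) ^ (k + 1) * (p.1 : ℝ)) fun n m => ?_
  have h1 := one_le_cast n
  have h2 := one_le_cast m
  calc (n : ℝ) ^ 2 * (m : ℝ) ^ 2 = (m : ℝ) ^ 2 * n * n := by ring
    _ ≤ ((n : ℝ) + m) ^ 2 * (n + m) * n := by gcongr <;> linarith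
    _ = ((n : ℝ) + m) ^ 3 * n := by ring
    _ ≤ ((n : ℝ) + m) ^ (k + 1) * n := by
      gcongr
      · linarith
      · omega

lemma summable_B (k : ℕ) (hk : 2 ≤ k) :
    Summable (fun p : ℕ+ × ℕ+ => 1 / ((p.1 : ℝ) ^ k * ((p.2 : ℝ) * ((p.1 : ℝ) + p.2)))) := by
  refine summable_of_le
    (f := fun p => (p.1 : ℝ) ^ k * ((p.2 : ℝ) * ((p.1 : ℝ) + p.2))) fun n m => ?_
  have h1 := one_le_cast n
  have h2 := one_le_cast m
  rw [pow_two (m : ℝ)]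
  gcongr
  linarith

/-- `∑ 1/(n^k m (n+m)) = ∑_n H_n/n^(k+1)`, with the last term of each `H_n` split off. -/
lemma tsum_harmonic (k : ℕ) (hk : 2 ≤ k) :
    ∑' p : ℕ+ × ℕ+, 1 / ((p.1 : ℝ) ^ k * ((p.2 : ℝ) * ((p.1 : ℝ) + p.2)))
      = ∑' n : ℕ+, 1 / (n : ℝ) ^ (k + 2)
        + ∑' p : ℕ+ × ℕ+, 1 / (((p.1 : ℝ) + p.2) ^ (k + 1) * (p.1 : ℝ)) := by
  have hT := hasSum_triangle (fun N m => 1 / ((N : ℝ) ^ (k + 1) * (m : ℝ)))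
    (by simpa using summable_D k hk)
  have hT' : HasSum (fun n : ℕ+ => ∑ i ∈ Finset.Ioo 0 (n : ℕ), 1 / ((n : ℝ) ^ (k + 1) * (i : ℝ)))
      (∑' p : ℕ+ × ℕ+, 1 / (((p.1 : ℝ) + p.2) ^ (k + 1) * (p.1 : ℝ))) := by
    have := (PNat.coe_injective.hasSum_iff (f := fun N : ℕ =>
      ∑ m ∈ Finset.Ioo 0 N, 1 / ((N : ℝ) ^ (k + 1) * (m : ℝ))) ?_).2 hT
    · simpa [Function.comp_def] using this
    · intro N hN
      have : N = 0 := by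
        by_contra h0
        exact hN ⟨⟨N, Nat.pos_of_ne_zero h0⟩, rfl⟩
      simp [this]
  have hZ : Summable (fun n : ℕ+ => 1 / ((n : ℕ) : ℝ) ^ (k + 2)) :=
    (Real.summable_one_div_nat_pow.2 (by omega : 1 < k + 2)).comp_injective PNat.coe_injective
  refine HasSum.unique ((summable_B k hk).hasSum.prod_fiberwise (fun n => ?_)) (hZ.hasSum.add hT')
  have h := (hasSum_inner n).mul_left (1 / (n : ℝ) ^ k)
  have h1 := one_le_cast n
  convert h using 1
  · rfl
  · funext m
    simp [mul_comm]
  · have : ∑ i ∈ Finset.Ioo 0 (n : ℕ), 1 / ((n : ℝ) ^ (k + 1) * (i : ℝ))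
        = 1 / (n : ℝ) ^ (k + 1) * ∑ i ∈ Finset.Ioo 0 (n : ℕ), 1 / (i : ℝ) := by
      rw [Finset.mul_sum]
      exact Finset.sum_congr rfl fun i _ => by rw [one_div_mul_one_div]
    rw [this]
    field_simp
    ring

lemma summable_W (k j : ℕ) (hk : 2 ≤ k) (hj : 2 ≤ j) (hjk : j ≤ k + 1) :
    Summable (fun p : ℕ+ × ℕ+ =>
      1 / ((p.1 : ℝ) ^ (k + 1 - j) * (p.2 : ℝ) ^ 1 * ((p.1 : ℝ) + p.2) ^ j)) := by
  refine summable_of_le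
    (f := fun p => (p.1 : ℝ) ^ (k + 1 - j) * (p.2 : ℝ) ^ 1 * ((p.1 : ℝ) + p.2) ^ j) fun n m => ?_
  have h1 := one_le_cast n
  have h2 := one_le_cast m
  obtain ⟨i, rfl⟩ := Nat.exists_eq_add_of_le hj
  calc (n : ℝ) ^ 2 * (m : ℝ) ^ 2 = n * m * (m * n) := by ring
    _ ≤ (n : ℝ) ^ (k + 1 - (2 + i) + i) * m * ((n + m) * (n + m)) := by
      gcongr
      · exact le_self_pow₀ h1 (by omega)
      · linarith
      · linarith
    _ = (n : ℝ) ^ (k + 1 - (2 + i)) * m * ((n + m) ^ 2 * (n : ℝ) ^ i) := by ring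
    _ ≤ (n : ℝ) ^ (k + 1 - (2 + i)) * m * ((n + m) ^ 2 * ((n : ℝ) + m) ^ i) := by
      gcongr
      linarith
    _ = _ := by ring

/-- The finite geometric sum behind the theorem, with `N = x + y`. -/
lemma geom_identity_s6 (k : ℕ) (hk : 1 ≤ k) (x y : ℝ) (hx : 0 < x) (hy : 0 < y) :
    ∑ j ∈ Finset.Icc 2 (k + 1), 1 / (x ^ (k + 1 - j) * y ^ 1 * (x + y) ^ j)
      + 1 / ((x + y) ^ k * y ^ 2) + 1 / (x ^ k * (y * (x + y)))
      = 1 / (x ^ k * y ^ 2) + 1 / ((x + y) ^ (k + 1) * y) := by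
  induction k, hk using Nat.le_induction with
  | base =>
    simp
    field_simp
    ring
  | succ k hk ih =>
    have hrec : ∑ j ∈ Finset.Icc 2 (k + 1), 1 / (x ^ (k + 1 + 1 - j) * y ^ 1 * (x + y) ^ j)
        = 1 / x * ∑ j ∈ Finset.Icc 2 (k + 1), 1 / (x ^ (k + 1 - j) * y ^ 1 * (x + y) ^ j) := by
      rw [Finset.mul_sum]
      refine Finset.sum_congr rfl fun j hj => ?_
      have hj' := (Finset.mem_Icc.1 hj).2
      rw [show k + 1 + 1 - j = (k + 1 - j) + 1 by omega, one_div_mul_one_div]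
      congr 1
      ring
    rw [Finset.sum_Icc_succ_top (by omega), hrec]
    have ih' : ∑ j ∈ Finset.Icc 2 (k + 1), 1 / (x ^ (k + 1 - j) * y ^ 1 * (x + y) ^ j)
      = 1 / (x ^ k * y ^ 2) + 1 / ((x + y) ^ (k + 1) * y)
        - 1 / ((x + y) ^ k * y ^ 2) - 1 / (x ^ k * (y * (x + y))) := by linarith
    rw [ih']
    simp only [Nat.sub_self, pow_zero, pow_succ]
    have hxy : x + y ≠ 0 := by positivity
    field_simp
    ring

theorem stmt6 (s : ℕ) (hs : 3 ≤ s) :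
    ∑ j ∈ Finset.Icc 2 s, wzeta (s - j) 1 j = dzeta 2 (s - 1) := by
  obtain ⟨k, rfl⟩ : ∃ k, s = k + 1 := ⟨s - 1, by omega⟩
  have hk : 2 ≤ k := by omega
  rw [Nat.add_sub_cancel]
  have sA : Summable (fun p : ℕ+ × ℕ+ => 1 / (((p.1 : ℝ) + p.2) ^ k * (p.2 : ℝ) ^ 2)) := by
    refine summable_of_le (f := fun p => ((p.1 : ℝ) + p.2) ^ k * (p.2 : ℝ) ^ 2) fun n m => ?_
    have h1 := one_le_cast n
    have h2 := one_le_cast m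
    gcongr
    calc (n : ℝ) ^ 2 ≤ (n : ℝ) ^ k := pow_le_pow_right₀ h1 hk
      _ ≤ _ := by gcongr; linarith
  have sC : Summable (fun p : ℕ+ × ℕ+ => 1 / ((p.1 : ℝ) ^ k * (p.2 : ℝ) ^ 2)) :=
    summable_of_le (f := fun p => (p.1 : ℝ) ^ k * (p.2 : ℝ) ^ 2) fun n m =>
      mul_le_mul_of_nonneg_right (pow_le_pow_right₀ (one_le_cast n) hk) (by positivity)
  have sE : Summable (fun p : ℕ+ × ℕ+ => 1 / ((p.1 : ℝ) ^ k * ((p.1 : ℝ) + p.2) ^ 2)) := by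
    refine summable_of_le (f := fun p => (p.1 : ℝ) ^ k * ((p.1 : ℝ) + p.2) ^ 2) fun n m => ?_
    have h1 := one_le_cast n
    have h2 := one_le_cast m
    gcongr
    linarith
  -- Exchanging `n` and `m` turns `∑ 1/(m N^(k+1))` into `∑ 1/(n N^(k+1))`.
  have swap : (fun p : ℕ+ × ℕ+ => 1 / (((p.1 : ℝ) + p.2) ^ (k + 1) * (p.2 : ℝ)))
      = (fun p : ℕ+ × ℕ+ => 1 / (((p.1 : ℝ) + p.2) ^ (k + 1) * (p.1 : ℝ)))
        ∘ Equiv.prodComm ℕ+ ℕ+ := by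
    funext p
    simp [add_comm]
  have hD : HasSum (fun p : ℕ+ × ℕ+ => 1 / (((p.1 : ℝ) + p.2) ^ (k + 1) * (p.2 : ℝ)))
      (∑' p : ℕ+ × ℕ+, 1 / (((p.1 : ℝ) + p.2) ^ (k + 1) * (p.1 : ℝ))) := by
    rw [swap, Equiv.hasSum_iff]
    exact (summable_D k hk).hasSum
  have hW : HasSum (fun p : ℕ+ × ℕ+ => ∑ j ∈ Finset.Icc 2 (k + 1),
      1 / ((p.1 : ℝ) ^ (k + 1 - j) * (p.2 : ℝ) ^ 1 * ((p.1 : ℝ) + p.2) ^ j))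
      (∑ j ∈ Finset.Icc 2 (k + 1), wzeta (k + 1 - j) 1 j) := by
    refine hasSum_sum fun j hj => ?_
    obtain ⟨hj1, hj2⟩ := Finset.mem_Icc.1 hj
    have h := summable_W k j hk hj1 hj2
    have e := h.tsum_prod
    rw [wzeta, ← e]
    exact h.hasSum
  have hdz : dzeta 2 k = ∑' p : ℕ+ × ℕ+, 1 / ((p.1 : ℝ) ^ k * ((p.1 : ℝ) + p.2) ^ 2) := by
    have h := hasSum_triangle (fun N m => 1 / ((N : ℝ) ^ 2 * (m : ℝ) ^ k))
      (by simpa [mul_comm] using sE)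
    rw [dzeta, h.tsum_eq]
    refine tsum_congr fun p => ?_
    push_cast
    rw [mul_comm]
  have hL := (hW.add sA.hasSum).add (summable_B k hk).hasSum
  have hR := sC.hasSum.add hD
  have hfun := funext fun p : ℕ+ × ℕ+ => geom_identity_s6 k (by omega) (p.1 : ℝ) (p.2 : ℝ)
    (by linarith [one_le_cast p.1]) (by linarith [one_le_cast p.2])
  rw [hfun] at hL
  have hLR := hL.unique hR
  rw [hdz]
  linarith [stuffle k hk, tsum_harmonic k hk]
end
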